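/- For all real x, y with |x| + |y| < 1 and x + y ≠ 0, the double series Σ_{n≥0} Σ_{k≥0} (n+k)(n+k+1)·q_{n,k}·x^n·y^k converges absolutely, equals Σ_{ℓ≥0} ℓ(ℓ+1)·(x+y)^ℓ·E[(x/(x+y))^{N_ℓ}], and equals (2x/(1−x−y)²)·Σ_{n≥0} Σ_{k≥0} q_{n,k}·x^n·y^k. -/

import Mathlib

open MeasureTheory

noncomputable section

/-- The triangle with vertices (0,0), (1,0), (0,1). -/
def T : Set (ℝ × ℝ) := convexHull ℝ {(0, 0), (1, 0), (0, 1)}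

/-- The uniform distribution on `T`: twice Lebesgue measure restricted to `T`. -/
def μT : Measure (ℝ × ℝ) := (2 : ENNReal) • (volume.restrict T)

/-- Joint law of `n` independent uniform points in `T`. -/
def P (n : ℕ) : Measure (Fin n → ℝ × ℝ) := Measure.pi fun _ => μT

/-- The random convex chain: convex hull of the points together with `(1,0)` and `(0,1)`. -/
def Tchain (n : ℕ) (ω : Fin n → ℝ × ℝ) : Set (ℝ × ℝ) :=
  convexHull ℝ (Set.range ω ∪ {(1, 0), (0, 1)})

/-- Normalized area `V_n = 2 vol(T_n)`. -/
def V (n : ℕ) (ω : Fin n → ℝ × ℝ) : ℝ := 2 * (volume (Tchain n ω)).toReal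

/-- Number of vertices of `T_n` other than the two corners. -/
def N (n : ℕ) (ω : Fin n → ℝ × ℝ) : ℕ :=
  (Set.extremePoints ℝ (Tchain n ω)).ncard - 2

/-- Normalized moments `q_{n,k} = C(n+k,k) E[V_n^k]`. -/
def q (n k : ℕ) : ℝ := ((n + k).choose k : ℝ) * ∫ ω, (V n ω) ^ k ∂ P n

/-- Probability generating function of `N_n`. -/
def G (n : ℕ) (t : ℝ) : ℝ := ∫ ω, t ^ (N n ω) ∂ P n

/-- Harmonic number. -/
def H (j : ℕ) : ℝ := ∑ i ∈ Finset.range j, 1 / ((i : ℝ) + 1)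

/-- Generalized harmonic number of order 2. -/
def H2 (j : ℕ) : ℝ := ∑ i ∈ Finset.range j, 1 / ((i : ℝ) + 1) ^ 2

/-- `c(k,ℓ)`: elementary symmetric polynomial `e_k` of `2/(j(j+1))`, `j = 1,…,ℓ`. -/
def c (k l : ℕ) : ℝ :=
  ∑ S ∈ (Finset.Icc 1 l).powersetCard k, ∏ j ∈ S, 2 / ((j : ℝ) * ((j : ℝ) + 1))

/-! ### Basic geometry of the triangle -/

/-- Open triangle. -/
def U0 : Set (ℝ × ℝ) := {z | 0 < z.1 ∧ 0 < z.2 ∧ z.1 + z.2 < 1}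

lemma T_eq : T = {z : ℝ × ℝ | 0 ≤ z.1 ∧ 0 ≤ z.2 ∧ z.1 + z.2 ≤ 1} := by
  apply Set.Subset.antisymm
  · refine convexHull_min ?_ ?_
    · intro z hz
      simp only [Set.mem_insert_iff, Set.mem_singleton_iff] at hz
      rcases hz with rfl | rfl | rfl <;> norm_num
    · rintro ⟨a, b⟩ ⟨ha, hb, hab⟩ ⟨c, d⟩ ⟨hc, hd, hcd⟩ s t hs ht hst
      simp only [Set.mem_ofPred_eq, Prod.smul_mk, Prod.mk_add_mk, smul_eq_mul] at *
      refine ⟨by positivity, by positivity, ?_⟩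
      nlinarith
  · rintro ⟨a, b⟩ ⟨ha, hb, hab⟩
    simp only at ha hb hab
    have hc := convex_convexHull ℝ ({(0, 0), (1, 0), (0, 1)} : Set (ℝ × ℝ))
    have h0 : ((0 : ℝ), (0 : ℝ)) ∈ T := subset_convexHull _ _ (by simp)
    have h1 : ((1 : ℝ), (0 : ℝ)) ∈ T := subset_convexHull _ _ (by simp)
    have h2 : ((0 : ℝ), (1 : ℝ)) ∈ T := subset_convexHull _ _ (by simp)
    have := hc.sum_mem (t := Finset.univ) (w := ![1 - a - b, a, b])
      (z := ![(0, 0), (1, 0), (0, 1)]) (by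
        intro i _; fin_cases i <;> simp <;> linarith)
      (by simp [Fin.sum_univ_three]; ring)
      (by intro i _; fin_cases i; exacts [h0, h1, h2])
    simpa [Fin.sum_univ_three, T] using this

lemma U0_subset_T : U0 ⊆ T := by
  rw [T_eq]; rintro z ⟨h1, h2, h3⟩; exact ⟨h1.le, h2.le, h3.le⟩

lemma measurableSet_U0 : MeasurableSet U0 := by
  have h1 : MeasurableSet {z : ℝ × ℝ | 0 < z.1} := measurableSet_lt (by fun_prop) (by fun_prop)
  have h2 : MeasurableSet {z : ℝ × ℝ | 0 < z.2} := measurableSet_lt (by fun_prop) (by fun_prop)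
  have h3 : MeasurableSet {z : ℝ × ℝ | z.1 + z.2 < 1} :=
    measurableSet_lt (by fun_prop) (by fun_prop)
  exact h1.inter (h2.inter h3)

lemma measurableSet_T : MeasurableSet T := by
  rw [T_eq]
  have h1 : MeasurableSet {z : ℝ × ℝ | 0 ≤ z.1} := measurableSet_le (by fun_prop) (by fun_prop)
  have h2 : MeasurableSet {z : ℝ × ℝ | 0 ≤ z.2} := measurableSet_le (by fun_prop) (by fun_prop)
  have h3 : MeasurableSet {z : ℝ × ℝ | z.1 + z.2 ≤ 1} :=
    measurableSet_le (by fun_prop) (by fun_prop)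
  exact h1.inter (h2.inter h3)

lemma null_graph (f : ℝ → ℝ) (hf : Measurable f) :
    (volume : Measure (ℝ × ℝ)) {z | z.2 = f z.1} = 0 := by
  have hm : MeasurableSet {z : ℝ × ℝ | z.2 = f z.1} :=
    measurableSet_eq_fun (by fun_prop) (by fun_prop)
  rw [Measure.volume_eq_prod, Measure.measure_prod_null hm]
  refine Filter.Eventually.of_forall fun x => ?_
  have : Prod.mk x ⁻¹' {z : ℝ × ℝ | z.2 = f z.1} = {f x} := by ext y; simp
  simp [this]

lemma null_vert (c : ℝ) : (volume : Measure (ℝ × ℝ)) {z | z.1 = c} = 0 := by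
  have : {z : ℝ × ℝ | z.1 = c} = {c} ×ˢ Set.univ := by ext z; simp
  rw [this, Measure.volume_eq_prod, Measure.prod_prod]; simp

lemma T_ae_U0 : T =ᵐ[volume] U0 := by
  have h1 := null_vert 0
  have h2 := null_graph (fun _ => 0) (by fun_prop)
  have h3 := null_graph (fun x => 1 - x) (by fun_prop)
  have g1 : ∀ᵐ z : ℝ × ℝ, z.1 ≠ 0 := by rw [ae_iff]; simpa using h1
  have g2 : ∀ᵐ z : ℝ × ℝ, z.2 ≠ 0 := by rw [ae_iff]; simpa using h2
  have g3 : ∀ᵐ z : ℝ × ℝ, z.2 ≠ 1 - z.1 := by rw [ae_iff]; simpa using h3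
  filter_upwards [g1, g2, g3] with z a1 a2 a3
  have : z ∈ T ↔ z ∈ U0 := by
    rw [T_eq]; unfold U0
    constructor
    · rintro ⟨b1, b2, b3⟩
      exact ⟨lt_of_le_of_ne b1 (Ne.symm a1), lt_of_le_of_ne b2 (Ne.symm a2),
        lt_of_le_of_ne b3 (fun h => a3 (by linarith))⟩
    · rintro ⟨b1, b2, b3⟩; exact ⟨b1.le, b2.le, b3.le⟩
  exact propext this

lemma μT_eq : μT = (2 : ENNReal) • (volume.restrict U0) := by
  unfold μT; rw [Measure.restrict_congr_set T_ae_U0]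

lemma U0_region : U0 = regionBetween (fun _ => 0) (fun x => 1 - x) (Set.Ioo (0:ℝ) 1) := by
  ext ⟨a, b⟩
  simp only [U0, regionBetween, Set.mem_ofPred_eq, Set.mem_Ioo]
  constructor
  · rintro ⟨h1, h2, h3⟩; exact ⟨⟨h1, by linarith⟩, h2, by linarith⟩
  · rintro ⟨⟨h1, h2⟩, h3, h4⟩; exact ⟨h1, h3, by linarith⟩

lemma lintegral_U0 (f : ℝ × ℝ → ENNReal) (hf : Measurable f) :
    ∫⁻ z in U0, f z = ∫⁻ x in Set.Ioo (0:ℝ) 1, ∫⁻ y in Set.Ioo (0:ℝ) (1 - x), f (x, y) := by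
  rw [← lintegral_indicator measurableSet_U0, Measure.volume_eq_prod,
    lintegral_prod _ ((hf.indicator measurableSet_U0).aemeasurable),
    ← lintegral_indicator measurableSet_Ioo]
  refine lintegral_congr fun x => ?_
  by_cases hx : x ∈ Set.Ioo (0:ℝ) 1
  · rw [Set.indicator_of_mem hx, ← lintegral_indicator measurableSet_Ioo]
    refine lintegral_congr fun y => ?_
    simp only [Set.indicator]
    congr 1
    simp only [U0_region, regionBetween, Set.mem_ofPred_eq, eq_iff_iff]
    exact ⟨fun h => h.2, fun h => ⟨hx, h⟩⟩
  · rw [Set.indicator_of_notMem hx]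
    rw [lintegral_eq_zero_iff' (by
      apply Measurable.aemeasurable
      exact (hf.indicator measurableSet_U0).comp (by fun_prop))]
    refine Filter.Eventually.of_forall fun y => ?_
    have : (x, y) ∉ U0 := by rw [U0_region]; exact fun h => hx h.1
    simp [Set.indicator_of_notMem this]

instance : IsProbabilityMeasure μT := by
  constructor
  have h : (volume : Measure (ℝ × ℝ)) U0 = ENNReal.ofReal (1 / 2) := by
    rw [U0_region, Measure.volume_eq_prod, volume_regionBetween_eq_integral]
    · congr 1
      rw [← integral_Ioc_eq_integral_Ioo, ← intervalIntegral.integral_of_le (by norm_num)]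
      rw [show (((fun x : ℝ => 1 - x) - fun _ => 0) : ℝ → ℝ) = fun x => 1 - x by ext; simp]
      rw [intervalIntegral.integral_sub (by simp) (by simp)]
      simp; norm_num
    · exact integrableOn_const (by simp)
    · exact (Continuous.integrableOn_Icc (by fun_prop)).mono_set Set.Ioo_subset_Icc_self
    · exact measurableSet_Ioo
    · intro x hx; have := hx.2; simp; linarith
  rw [μT_eq]
  simp only [Measure.smul_apply, Measure.restrict_apply_univ, h, smul_eq_mul]
  rw [show (2 : ENNReal) = ENNReal.ofReal 2 by simp, ← ENNReal.ofReal_mul (by norm_num)]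
  norm_num

instance (n : ℕ) : IsProbabilityMeasure (P n) := by unfold P; infer_instance

lemma ae_U0 : ∀ᵐ z ∂μT, z ∈ U0 := by
  rw [μT_eq]
  exact Measure.ae_smul_measure (ae_restrict_mem measurableSet_U0) _

lemma ae_μT {p : ℝ × ℝ → Prop} (h : ∀ᵐ z ∂(volume : Measure (ℝ × ℝ)), p z) : ∀ᵐ z ∂μT, p z := by
  unfold μT
  exact Measure.ae_smul_measure (ae_restrict_of_ae h) _

/-- slope seen from `(1,0)` -/
def slope0 (z : ℝ × ℝ) : ℝ := z.2 / (1 - z.1)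

lemma measurable_slope0 : Measurable slope0 := by unfold slope0; fun_prop

lemma ae_slope_ne (s : ℝ) : ∀ᵐ z ∂μT, slope0 z ≠ s := by
  have h : ∀ᵐ z : ℝ × ℝ, z.2 ≠ s * (1 - z.1) := by
    rw [ae_iff]; simpa using null_graph (fun x => s * (1 - x)) (by fun_prop)
  filter_upwards [ae_μT h, ae_U0] with z hz hU heq
  apply hz
  have : 1 - z.1 ≠ 0 := by have := hU.2.1; have := hU.2.2; intro h; linarith
  rw [← heq, slope0]; field_simp

/-! ### Affine maps and the decomposition of the measure -/

/-- The affine map of the plane with given translation part and matrix. -/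
def aff (p1 p2 m11 m12 m21 m22 : ℝ) : (ℝ × ℝ) →ᵃ[ℝ] (ℝ × ℝ) :=
  (Matrix.toLin (Module.Basis.finTwoProd ℝ) (Module.Basis.finTwoProd ℝ)
    !![m11, m12; m21, m22]).toAffineMap + AffineMap.const ℝ (ℝ × ℝ) (p1, p2)

lemma aff_apply (p1 p2 m11 m12 m21 m22 : ℝ) (z : ℝ × ℝ) :
    aff p1 p2 m11 m12 m21 m22 z =
      (m11 * z.1 + m12 * z.2 + p1, m21 * z.1 + m22 * z.2 + p2) := by
  simp [aff, Matrix.toLin_finTwoProd_apply]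

lemma aff_continuous (p1 p2 m11 m12 m21 m22 : ℝ) : Continuous (aff p1 p2 m11 m12 m21 m22) := by
  have : (aff p1 p2 m11 m12 m21 m22 : ℝ × ℝ → ℝ × ℝ) = fun z =>
      (m11 * z.1 + m12 * z.2 + p1, m21 * z.1 + m22 * z.2 + p2) := by
    ext1 z; exact aff_apply ..
  rw [this]; fun_prop

lemma aff_injective (p1 p2 m11 m12 m21 m22 : ℝ) (hd : m11 * m22 - m12 * m21 ≠ 0) :
    Function.Injective (aff p1 p2 m11 m12 m21 m22) := by
  rintro ⟨a, b⟩ ⟨c, d⟩ h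
  simp only [aff_apply, Prod.mk.injEq] at h
  obtain ⟨h1, h2⟩ := h
  have e1 : (m11 * m22 - m12 * m21) * (a - c) = 0 := by linear_combination m22 * h1 - m12 * h2
  have e2 : (m11 * m22 - m12 * m21) * (b - d) = 0 := by linear_combination m11 * h2 - m21 * h1
  have f1 := (mul_eq_zero.mp e1).resolve_left hd
  have f2 := (mul_eq_zero.mp e2).resolve_left hd
  ext <;> simp <;> linarith

lemma aff_map_volume (p1 p2 m11 m12 m21 m22 : ℝ) (hd : m11 * m22 - m12 * m21 ≠ 0) :
    (volume : Measure (ℝ × ℝ)) = ENNReal.ofReal |m11 * m22 - m12 * m21| •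
      Measure.map (aff p1 p2 m11 m12 m21 m22) volume := by
  set L := (Matrix.toLin (Module.Basis.finTwoProd ℝ) (Module.Basis.finTwoProd ℝ)
    !![m11, m12; m21, m22]) with hL
  have hdet : LinearMap.det L = m11 * m22 - m12 * m21 := by
    rw [hL, LinearMap.det_toLin, Matrix.det_fin_two_of]
  have h1 := Measure.map_linearMap_addHaar_eq_smul_addHaar (volume : Measure (ℝ × ℝ))
    (f := L) (by rw [hdet]; exact hd)
  have hLm : Measurable L := L.continuous_of_finiteDimensional.measurable
  have h2 : (aff p1 p2 m11 m12 m21 m22 : ℝ × ℝ → ℝ × ℝ) = (fun z => z + (p1, p2)) ∘ L := by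
    ext1 z; simp [aff, hL]
  rw [h2, ← Measure.map_map (by fun_prop) hLm, h1, Measure.map_smul, map_add_right_eq_self,
    smul_smul, hdet, ← ENNReal.ofReal_mul (abs_nonneg _), abs_inv,
    mul_inv_cancel₀ (abs_ne_zero.mpr hd)]
  simp

lemma aff_restrict (p1 p2 m11 m12 m21 m22 : ℝ) (hd : m11 * m22 - m12 * m21 ≠ 0)
    (S : Set (ℝ × ℝ)) :
    (volume : Measure (ℝ × ℝ)).restrict (aff p1 p2 m11 m12 m21 m22 '' S) =
      ENNReal.ofReal |m11 * m22 - m12 * m21| •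
      Measure.map (aff p1 p2 m11 m12 m21 m22) (volume.restrict S) := by
  have hinj := aff_injective p1 p2 m11 m12 m21 m22 hd
  have hemb : MeasurableEmbedding (aff p1 p2 m11 m12 m21 m22) :=
    (aff_continuous p1 p2 m11 m12 m21 m22).measurableEmbedding hinj
  conv_lhs => rw [aff_map_volume p1 p2 m11 m12 m21 m22 hd]
  rw [Measure.restrict_smul, hemb.restrict_map, Set.preimage_image_eq _ hinj]

/-- The affine map sending `T` to the triangle with vertices `(0,s)`, `X = (a,b)`, `(0,1)`. -/
def phi (a b : ℝ) : (ℝ × ℝ) →ᵃ[ℝ] (ℝ × ℝ) :=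
  aff 0 (b / (1 - a)) a 0 (-a * (b / (1 - a))) (1 - b / (1 - a))

/-- The affine map sending `T` to the triangle with vertices `X = (a,b)`, `(1,0)`, `(0,1)`. -/
def psi (a b : ℝ) : (ℝ × ℝ) →ᵃ[ℝ] (ℝ × ℝ) :=
  aff a b (1 - a) (-a) (-b) (1 - b)

lemma phi_apply (a b : ℝ) (z : ℝ × ℝ) : phi a b z =
    (a * z.1, -a * (b / (1 - a)) * z.1 + (1 - b / (1 - a)) * z.2 + b / (1 - a)) := by
  simp [phi, aff_apply]

lemma psi_apply (a b : ℝ) (z : ℝ × ℝ) : psi a b z =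
    ((1 - a) * z.1 + (-a) * z.2 + a, -b * z.1 + (1 - b) * z.2 + b) := by
  simp [psi, aff_apply]

lemma slope_lt (a b : ℝ) (h : (a, b) ∈ U0) : 0 < b / (1 - a) ∧ b / (1 - a) < 1 := by
  obtain ⟨h1, h2, h3⟩ := h
  simp only at h1 h2 h3
  have : 0 < 1 - a := by linarith
  exact ⟨by positivity, by rw [div_lt_one this]; linarith⟩

lemma phi_det (a b : ℝ) (h : (a, b) ∈ U0) :
    a * (1 - b / (1 - a)) - 0 * (-a * (b / (1 - a))) ≠ 0 := by
  have := slope_lt a b h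
  have h1 := h.1
  simp only at h1
  have : 0 < a * (1 - b / (1 - a)) := mul_pos h1 (by linarith)
  intro h; linarith

lemma psi_det (a b : ℝ) (h : (a, b) ∈ U0) : (1 - a) * (1 - b) - (-a) * (-b) ≠ 0 := by
  have h1 := h.2.2
  simp only at h1
  intro h; nlinarith

lemma phi_image (a b : ℝ) (h : (a, b) ∈ U0) : phi a b '' U0 =
    {z | z ∈ U0 ∧ b / (1 - a) < slope0 z ∧
      z.2 < (1 - b / (1 - a)) * (1 - z.1 / a) + b / (1 - a) * (1 - z.1)} := by
  obtain ⟨hs0, hs1⟩ := slope_lt a b h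
  set s := b / (1 - a) with hs
  obtain ⟨h1, h2, h3⟩ := h
  simp only at h1 h2 h3
  have hs' : 0 < 1 - s := by linarith
  ext ⟨x, y⟩
  simp only [Set.mem_image, phi_apply, ← hs, Set.mem_ofPred_eq, Prod.mk.injEq]
  constructor
  · rintro ⟨⟨u, v⟩, ⟨hu, hv, huv⟩, rfl, rfl⟩
    simp only at hu hv huv ⊢
    have hu1 : a * u < 1 := by nlinarith
    have : 0 < 1 - a * u := by linarith
    refine ⟨⟨by simp only; positivity, ?_, ?_⟩, ?_, ?_⟩
    · simp only
      have : 0 < (1 - s) * v := mul_pos hs' hv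
      nlinarith
    · have : 0 < (1 - s) * (1 - v - a * u) := mul_pos hs' (by nlinarith)
      simp only
      nlinarith
    · rw [slope0, lt_div_iff₀ this]; simp only; nlinarith
    · have : a * u / a = u := by field_simp
      rw [this]
      have : 0 < (1 - s) * (1 - u - v) := mul_pos hs' (by linarith)
      nlinarith
  · rintro ⟨⟨hx, hy, hxy⟩, hsl, hL⟩
    simp only at hx hy hxy
    have hx1 : x < 1 := by linarith
    have hx1' : 0 < 1 - x := by linarith
    rw [slope0, lt_div_iff₀ hx1'] at hsl
    simp only at hsl
    refine ⟨(x / a, (y - s * (1 - x)) / (1 - s)), ⟨by positivity, ?_, ?_⟩, ?_, ?_⟩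
    · apply div_pos <;> linarith
    · simp only
      have : (y - s * (1 - x)) / (1 - s) < 1 - x / a := by
        rw [div_lt_iff₀ hs']; linarith
      linarith
    · simp only; field_simp
    · simp only
      have hne := hs'.ne'
      have e1 : a * (x / a) = x := by field_simp
      have e2 : (1 - s) * ((y - s * (1 - x)) / (1 - s)) = y - s * (1 - x) := by field_simp
      rw [e2]
      linear_combination (-s) * e1

lemma psi_image (a b : ℝ) (h : (a, b) ∈ U0) : psi a b '' U0 =
    {z | z ∈ U0 ∧ b / (1 - a) < slope0 z ∧
      (1 - b / (1 - a)) * (1 - z.1 / a) + b / (1 - a) * (1 - z.1) < z.2} := by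
  obtain ⟨hs0, hs1⟩ := slope_lt a b h
  set s := b / (1 - a) with hs
  obtain ⟨h1, h2, h3⟩ := h
  simp only at h1 h2 h3
  have h1a : 0 < 1 - a := by linarith
  have hb : b = s * (1 - a) := by rw [hs]; field_simp
  have hs' : 0 < 1 - s := by linarith
  ext ⟨x, y⟩
  simp only [Set.mem_image, psi_apply, Set.mem_ofPred_eq, Prod.mk.injEq]
  constructor
  · rintro ⟨⟨u, v⟩, ⟨hu, hv, huv⟩, rfl, rfl⟩
    simp only at hu hv huv ⊢
    have hau : 0 < (1 - a) * u := mul_pos h1a hu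
    have hx0 : 0 < (1 - a) * u + -a * v + a := by nlinarith
    have hx1 : 0 < 1 - ((1 - a) * u + -a * v + a) := by
      have : 0 < (1 - a) * (1 - u) := mul_pos h1a (by linarith)
      nlinarith
    refine ⟨⟨hx0, ?_, ?_⟩, ?_, ?_⟩
    · simp only; nlinarith
    · simp only; nlinarith
    · rw [slope0, lt_div_iff₀ hx1]; simp only; rw [hb]
      have : 0 < (1 - s) * v := mul_pos hs' hv
      nlinarith
    · have : ((1 - a) * u + -a * v + a) / a = (1 - a) * u / a - v + 1 := by field_simp; ring
      rw [this]
      have h8 : 0 < (1 - a) * u / a := by positivity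
      have : 0 < (1 - s) * ((1 - a) * u / a) := mul_pos hs' h8
      rw [hb]
      nlinarith
  · rintro ⟨⟨hx, hy, hxy⟩, hsl, hL⟩
    simp only at hx hy hxy
    have hx1 : x < 1 := by linarith
    have hx1' : 0 < 1 - x := by linarith
    rw [slope0, lt_div_iff₀ hx1'] at hsl
    simp only at hsl
    set v := (y - s * (1 - x)) / (1 - s) with hv
    have hvv : (1 - s) * v = y - s * (1 - x) := by rw [hv]; field_simp
    refine ⟨((x - a + v * a) / (1 - a), v), ⟨?_, ?_, ?_⟩, ?_, ?_⟩
    · apply div_pos _ h1a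
      have : 1 - x / a < v := by rw [hv, lt_div_iff₀ hs']; linarith
      have := mul_lt_mul_of_pos_left this h1
      have e : a * (1 - x / a) = a - x := by field_simp
      linarith
    · apply div_pos <;> linarith
    · have : (x - a + v * a) / (1 - a) < 1 - v := by
        rw [div_lt_iff₀ h1a]
        have : v < 1 - x := by rw [hv, div_lt_iff₀ hs']; linarith
        linarith
      simp only; linarith
    · simp only; field_simp; ring
    · simp only
      have e : (1 - a) * ((x - a + v * a) / (1 - a)) = (x - a + v * a) := by field_simp
      rw [hb]; linear_combination hvv - s * e

lemma measure_decomp (a b : ℝ) (h : (a, b) ∈ U0) :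
    μT.restrict {z | slope0 (a, b) < slope0 z} =
      ENNReal.ofReal (a * (1 - b / (1 - a))) • Measure.map (phi a b) μT +
      ENNReal.ofReal (1 - a - b) • Measure.map (psi a b) μT := by
  have hmeas : MeasurableSet {z | slope0 (a, b) < slope0 z} :=
    measurableSet_lt measurable_const measurable_slope0
  have e1 := aff_restrict 0 (b / (1 - a)) a 0 (-a * (b / (1 - a))) (1 - b / (1 - a))
    (phi_det a b h) U0
  have e2 := aff_restrict a b (1 - a) (-a) (-b) (1 - b) (psi_det a b h) U0
  change volume.restrict (phi a b '' U0) = _ • Measure.map (phi a b) _ at e1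
  change volume.restrict (psi a b '' U0) = _ • Measure.map (psi a b) _ at e2
  have d1 : |a * (1 - b / (1 - a)) - 0 * (-a * (b / (1 - a)))| = a * (1 - b / (1 - a)) := by
    have := slope_lt a b h
    have h1 := h.1
    simp only at h1
    rw [zero_mul, sub_zero, abs_of_pos (mul_pos h1 (by linarith))]
  have d2 : |(1 - a) * (1 - b) - -a * -b| = 1 - a - b := by
    have h3 := h.2.2
    simp only at h3
    rw [show (1 - a) * (1 - b) - -a * -b = 1 - a - b by ring, abs_of_pos (by linarith)]
  rw [d1] at e1
  rw [d2] at e2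
  rw [μT_eq, Measure.map_smul, Measure.map_smul, smul_comm _ (2 : ENNReal),
    smul_comm _ (2 : ENNReal), ← e1, ← e2, ← smul_add, Measure.restrict_smul,
    Measure.restrict_restrict hmeas]
  congr 1
  have m2 : MeasurableSet (psi a b '' U0) := by
    have hemb : MeasurableEmbedding (psi a b) :=
      (aff_continuous ..).measurableEmbedding (aff_injective _ _ _ _ _ _ (psi_det a b h))
    exact hemb.measurableSet_image.mpr measurableSet_U0
  rw [← Measure.restrict_union _ m2]
  · apply Measure.restrict_congr_set
    have hn : ∀ᵐ z : ℝ × ℝ, z.2 ≠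
        (1 - b / (1 - a)) * (1 - z.1 / a) + b / (1 - a) * (1 - z.1) := by
      rw [ae_iff]
      simpa using null_graph (fun x => (1 - b / (1 - a)) * (1 - x / a) + b / (1 - a) * (1 - x))
        (by fun_prop)
    filter_upwards [hn] with z hz
    have : z ∈ {z | slope0 (a, b) < slope0 z} ∩ U0 ↔ z ∈ phi a b '' U0 ∪ psi a b '' U0 := by
      rw [phi_image a b h, psi_image a b h]
      constructor
      · rintro ⟨k1, k2⟩
        rcases lt_or_gt_of_ne hz with k | k
        · exact Or.inl ⟨k2, k1, k⟩
        · exact Or.inr ⟨k2, k1, k⟩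
      · rintro (⟨k1, k2, k3⟩ | ⟨k1, k2, k3⟩)
        · exact ⟨k2, k1⟩
        · exact ⟨k2, k1⟩
    exact propext this
  · rw [phi_image a b h, psi_image a b h, Set.disjoint_left]
    rintro z ⟨_, _, h4⟩ ⟨_, _, h5⟩
    exact lt_asymm h4 h5

/-! ### Product measures -/

lemma pi_smul_measure {ι α : Type*} [Fintype ι] [MeasurableSpace α] (k : ι → NNReal)
    (μ : ι → Measure α) [∀ i, IsFiniteMeasure (μ i)] :
    Measure.pi (fun i => k i • μ i) = (∏ i, k i) • Measure.pi μ := by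
  refine Measure.pi_eq fun s _ => ?_
  simp only [Measure.smul_apply, Measure.pi_pi, ENNReal.smul_def, smul_eq_mul,
    Finset.prod_mul_distrib, ENNReal.ofNNReal_finsetProd]

lemma pi_add_measure {ι α : Type*} [Fintype ι] [DecidableEq ι] [MeasurableSpace α]
    (μ ν : Measure α) [IsFiniteMeasure μ] [IsFiniteMeasure ν] :
    Measure.pi (fun _ : ι => μ + ν) =
      ∑ J : Finset ι, Measure.pi (fun i => if i ∈ J then μ else ν) := by
  have hfin : ∀ (J : Finset ι) (i : ι), IsFiniteMeasure (if i ∈ J then μ else ν) := by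
    intro J i; split_ifs <;> infer_instance
  refine Measure.pi_eq fun s _ => ?_
  rw [Measure.finsetSum_apply]
  simp only [Measure.pi_pi, Measure.add_apply]
  rw [Finset.prod_add, Finset.powerset_univ]
  refine Finset.sum_congr rfl fun J _ => ?_
  rw [← Finset.compl_eq_univ_sdiff, ← Finset.prod_mul_prod_compl J]
  congr 1
  · exact Finset.prod_congr rfl fun i hi => by simp [hi]
  · exact Finset.prod_congr rfl fun i hi => by simp [Finset.mem_compl.mp hi]

lemma pi_comp_inj {ι κ α : Type*} [Fintype ι] [Fintype κ] [MeasurableSpace α]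
    (μ : Measure α) [IsProbabilityMeasure μ] (g : ι → κ) (hg : Function.Injective g) :
    MeasurePreserving (fun (ω : κ → α) (i : ι) => ω (g i)) (Measure.pi fun _ => μ)
      (Measure.pi fun _ => μ) := by
  classical
  refine ⟨by fun_prop, ?_⟩
  symm
  refine Measure.pi_eq fun s hs => ?_
  rw [Measure.map_apply (by fun_prop) (MeasurableSet.univ_pi hs)]
  have : (fun (ω : κ → α) (i : ι) => ω (g i)) ⁻¹' (Set.univ.pi s) =
      Set.univ.pi (Function.extend g s (fun _ => Set.univ)) := by
    ext ω
    simp only [Set.mem_preimage, Set.mem_univ_pi]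
    constructor
    · intro h k
      by_cases hk : ∃ i, g i = k
      · obtain ⟨i, rfl⟩ := hk
        rw [hg.extend_apply]; exact h i
      · rw [Function.extend_apply' _ _ _ hk]; trivial
    · intro h i
      have := h (g i)
      rwa [hg.extend_apply] at this
  rw [this, Measure.pi_pi]
  symm
  apply Finset.prod_of_injOn g hg.injOn (by simp)
  · intro k _ hk
    rw [Function.extend_apply' _ _ _ (by simpa using hk)]
    simp
  · intro i _
    rw [hg.extend_apply]

lemma pi_ae_pair {ι α : Type*} [Fintype ι] [MeasurableSpace α]
    (μ : Measure α) [IsProbabilityMeasure μ] (R : Set (α × α)) (hR : MeasurableSet R)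
    (h : ∀ x, ∀ᵐ y ∂μ, (x, y) ∈ R) :
    ∀ᵐ ω ∂(Measure.pi fun _ : ι => μ), ∀ i j, i ≠ j → (ω i, ω j) ∈ R := by
  rw [ae_all_iff]; intro i
  rw [ae_all_iff]; intro j
  by_cases hij : i = j
  · simp [hij]
  have hg : Function.Injective (![i, j] : Fin 2 → ι) := by
    intro a b hab
    fin_cases a <;> fin_cases b <;> simp_all
  have h1 := pi_comp_inj μ _ hg
  have h2 := (measurePreserving_finTwoArrow μ).comp h1
  have h3 : ∀ᵐ p ∂(μ.prod μ), p ∈ R :=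
    (Measure.ae_prod_mem_iff_ae_ae_mem hR).mpr (Filter.Eventually.of_forall h)
  have h4 := h2.quasiMeasurePreserving.ae h3
  filter_upwards [h4] with ω hω _
  exact hω

lemma pi_fubini {ι α : Type*} [Fintype ι] [MeasurableSpace α]
    (μ : Measure α) [IsProbabilityMeasure μ] (p : ι → Prop) [DecidablePred p]
    (R : Set ((Subtype p → α) × α)) (hR : MeasurableSet R) :
    (Measure.pi fun _ : ι => μ) {ω | ∀ j, ¬ p j → ((fun i : Subtype p => ω i), ω j) ∈ R} =
      ∫⁻ η, (μ (Prod.mk η ⁻¹' R)) ^ (Fintype.card {j // ¬ p j})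
        ∂(Measure.pi fun _ : Subtype p => μ) := by
  have h1 := measurePreserving_piEquivPiSubtypeProd (fun _ : ι => μ) p
  let W : Set ((Subtype p → α) × ({j // ¬ p j} → α)) := ⋂ j, {x | (x.1, x.2 j) ∈ R}
  have hW : MeasurableSet W := by
    refine MeasurableSet.iInter fun j => ?_
    exact (show Measurable fun x : (Subtype p → α) × ({j // ¬ p j} → α) => (x.1, x.2 j) by
      fun_prop) hR
  have h2 := h1.measure_preimage hW.nullMeasurableSet
  have h3 : (MeasurableEquiv.piEquivPiSubtypeProd (fun _ : ι => α) p) ⁻¹' W =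
      {ω | ∀ j, ¬ p j → ((fun i : Subtype p => ω i), ω j) ∈ R} := by
    ext ω
    simp only [Set.mem_preimage, W, Set.mem_iInter, Set.mem_ofPred_eq]
    constructor
    · intro h j hj; exact h ⟨j, hj⟩
    · rintro h ⟨j, hj⟩; exact h j hj
  rw [← h3, h2, Measure.prod_apply hW]
  refine lintegral_congr fun η => ?_
  have : Prod.mk η ⁻¹' W = Set.univ.pi (fun _ => Prod.mk η ⁻¹' R) := by
    ext ζ; simp [W]
  rw [this, Measure.pi_pi]; simp

/-! ### Closedness of hull membership -/

lemma isClosed_hull {κ : Type*} [Fintype κ] :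
    IsClosed {x : (κ → ℝ × ℝ) × (ℝ × ℝ) |
      x.2 ∈ convexHull ℝ (Set.range x.1 ∪ {(1, 0), (0, 1)})} := by
  classical
  let ξ : (κ → ℝ × ℝ) → (κ ⊕ Fin 2) → ℝ × ℝ := fun η => Sum.elim η ![(1, 0), (0, 1)]
  have hξc : ∀ i, Continuous fun η => ξ η i := by
    rintro (i | i)
    · exact continuous_apply i
    · exact continuous_const
  have hr : ∀ η, Set.range η ∪ {(1, 0), (0, 1)} = Set.range (ξ η) := by
    intro η; simp [ξ, Set.Sum.elim_range, Set.insert_comm]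
  have hmem : ∀ (η : κ → ℝ × ℝ) (z : ℝ × ℝ),
      z ∈ convexHull ℝ (Set.range η ∪ {(1, 0), (0, 1)}) ↔
      ∃ w : stdSimplex ℝ (κ ⊕ Fin 2), z = ∑ i, w.1 i • ξ η i := by
    intro η z
    rw [hr]
    constructor
    · intro hz
      have hconv : Convex ℝ {z : ℝ × ℝ | ∃ w : stdSimplex ℝ (κ ⊕ Fin 2),
          z = ∑ i, w.1 i • ξ η i} := by
        rintro _ ⟨w, rfl⟩ _ ⟨v, rfl⟩ a b ha hb hab
        refine ⟨⟨a • w.1 + b • v.1,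
          convex_stdSimplex ℝ _ w.2 v.2 ha hb hab⟩, ?_⟩
        simp only [Pi.add_apply, Pi.smul_apply, add_smul, Finset.sum_add_distrib,
          Finset.smul_sum, smul_smul, smul_eq_mul]
      refine convexHull_min ?_ hconv hz
      rintro _ ⟨i, rfl⟩
      refine ⟨⟨Pi.single i 1, single_mem_stdSimplex ℝ i⟩, ?_⟩
      simp [Pi.single_apply]
    · rintro ⟨w, rfl⟩
      exact (convex_convexHull ℝ _).sum_mem (fun i _ => w.2.1 i) w.2.2
        (fun i _ => subset_convexHull _ _ ⟨i, rfl⟩)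
  let C : Set (stdSimplex ℝ (κ ⊕ Fin 2) × ((κ → ℝ × ℝ) × (ℝ × ℝ))) :=
    {y | y.2.2 = ∑ i, y.1.1 i • ξ y.2.1 i}
  have hC : IsClosed C := by
    refine isClosed_eq (by fun_prop) ?_
    refine continuous_finsetSum _ fun i _ => ?_
    have hy : Continuous (fun y : stdSimplex ℝ (κ ⊕ Fin 2) × ((κ → ℝ × ℝ) × (ℝ × ℝ)) => y.2.1) := by
      fun_prop
    have hw : Continuous (fun y : stdSimplex ℝ (κ ⊕ Fin 2) × ((κ → ℝ × ℝ) × (ℝ × ℝ)) =>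
        y.1.1 i) := (continuous_apply i).comp (continuous_subtype_val.comp continuous_fst)
    exact hw.smul ((hξc i).comp hy)
  have := isClosedMap_snd_of_compactSpace C hC
  convert this using 1
  ext ⟨η, z⟩
  simp only [Set.mem_ofPred_eq, hmem, C, Set.mem_image]
  constructor
  · rintro ⟨w, h⟩; exact ⟨(w, η, z), h, rfl⟩
  · rintro ⟨⟨w, η', z'⟩, h, he⟩
    obtain ⟨rfl, rfl⟩ := Prod.mk.inj he
    exact ⟨w, h⟩

/-- Index `i` is extremal among the points `ω` and the two corners. -/
def ExtI {ι : Type*} (ω : ι → ℝ × ℝ) (i : ι) : Prop :=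
  ω i ∉ convexHull ℝ (ω '' {i}ᶜ ∪ {(1, 0), (0, 1)})

open Classical in
/-- Number of extremal indices. -/
def M {ι : Type*} [Fintype ι] (ω : ι → ℝ × ℝ) : ℕ := ∑ i, if ExtI ω i then 1 else 0

lemma measurableSet_ExtI {ι : Type*} [Fintype ι] (i : ι) :
    MeasurableSet {ω : ι → ℝ × ℝ | ExtI ω i} := by
  classical
  have h := (isClosed_hull (κ := {k : ι // k ≠ i})).measurableSet
  have h2 : Measurable (fun ω : ι → ℝ × ℝ => ((fun k : {k : ι // k ≠ i} => ω k), ω i)) := by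
    fun_prop
  convert (h2 h).compl using 1
  ext ω
  simp only [ExtI, Set.mem_ofPred_eq, Set.mem_compl_iff, Set.mem_preimage]
  have : ω '' {i}ᶜ = Set.range (fun k : {k : ι // k ≠ i} => ω k) := by
    ext z; simp
  rw [this]

lemma measurable_M {ι : Type*} [Fintype ι] : Measurable (M (ι := ι)) := by
  classical
  unfold M
  refine Finset.measurable_fun_sum _ fun i _ => ?_
  exact Measurable.ite (measurableSet_ExtI i) measurable_const measurable_const

lemma M_equiv {ι κ : Type*} [Fintype ι] [Fintype κ] (e : ι ≃ κ) (ω : κ → ℝ × ℝ) :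
    M (fun i => ω (e i)) = M ω := by
  classical
  unfold M
  rw [← e.sum_comp]
  refine Finset.sum_congr rfl fun i _ => ?_
  have : ExtI (fun i => ω (e i)) i ↔ ExtI ω (e i) := by
    unfold ExtI
    have : (fun i => ω (e i)) '' {i}ᶜ = ω '' {e i}ᶜ := by
      ext z
      simp only [Set.mem_image, Set.mem_compl_iff, Set.mem_singleton_iff]
      constructor
      · rintro ⟨k, hk, rfl⟩; exact ⟨e k, by simpa using hk, rfl⟩
      · rintro ⟨k, hk, rfl⟩
        exact ⟨e.symm k, by rintro rfl; simp at hk, by simp⟩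
    rw [this]
  simp only [this]

lemma M_le {ι : Type*} [Fintype ι] (ω : ι → ℝ × ℝ) : M ω ≤ Fintype.card ι := by
  classical
  unfold M
  calc _ ≤ ∑ _i : ι, 1 := Finset.sum_le_sum fun i _ => by split_ifs <;> simp
    _ = _ := by simp

/-- Marginalisation of `M`. -/
lemma lintegral_M_sub {m : ℕ} (J : Finset (Fin m)) (f : ℕ → ENNReal) :
    ∫⁻ ω, f (M (fun i : J => ω i)) ∂(P m) = ∫⁻ ω, f (M ω) ∂(P J.card) := by
  have hf : Measurable fun ω : Fin J.card → ℝ × ℝ => f (M ω) :=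
    (measurable_from_top).comp measurable_M
  let g : Fin J.card → Fin m := fun i => (J.equivFin.symm i : Fin m)
  have hg : Function.Injective g := Subtype.val_injective.comp J.equivFin.symm.injective
  have h := pi_comp_inj μT g hg
  have h2 := h.lintegral_comp hf
  unfold P
  rw [← h2]
  refine lintegral_congr fun ω => ?_
  congr 1
  exact (M_equiv J.equivFin.symm (fun i : J => ω i)).symm

/-! ### The deterministic core -/

/-- If `w ∈ T` lies in the hull of `(κ,0)` with `κ ≥ 1` and `Q ⊆ T`, where `Q` contains the two
corners, then `w` is already in the hull of `Q`. -/
lemma hull_drop (κ : ℝ) (hκ : 1 < κ) (Q : Set (ℝ × ℝ)) (hQ : Q ⊆ T)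
    (h1 : ((1 : ℝ), (0 : ℝ)) ∈ Q) (h2 : ((0 : ℝ), (1 : ℝ)) ∈ Q) (w : ℝ × ℝ) (hw : w ∈ T)
    (h : w ∈ convexHull ℝ (insert (κ, 0) Q)) : w ∈ convexHull ℝ Q := by
  rw [convexHull_insert ⟨_, h1⟩, mem_convexJoin] at h
  obtain ⟨_, rfl, d, hd, hseg⟩ := h
  have hdT : d ∈ T := convexHull_min hQ (convex_convexHull ℝ _) hd
  rw [T_eq] at hdT hw
  obtain ⟨c1, c2⟩ := d
  obtain ⟨w1, w2⟩ := w
  obtain ⟨τ, σ, hτ, hσ, hτσ, he⟩ := hseg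
  simp only [Prod.smul_mk, smul_eq_mul, Prod.mk_add_mk, Prod.mk.injEq, mul_zero, zero_add] at he
  obtain ⟨e1, e2⟩ := he
  obtain ⟨a1, a2, a3⟩ := hdT
  obtain ⟨b1, b2, b3⟩ := hw
  simp only at a1 a2 a3 b1 b2 b3
  have hcv := convex_convexHull ℝ Q
  rcases eq_or_lt_of_le a3 with a4 | a4
  · have : τ * (κ - 1) ≤ 0 := by
      have : w1 + w2 = 1 + τ * (κ - 1) := by
        rw [← e1, ← e2]; linear_combination σ * a4 + hτσ
      linarith
    have hτ0 : τ = 0 := by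
      by_contra hne
      have : 0 < τ := lt_of_le_of_ne hτ (Ne.symm hne)
      have : 0 < τ * (κ - 1) := mul_pos this (by linarith)
      linarith
    have hσ1 : σ = 1 := by linarith
    subst hτ0; subst hσ1
    simp only [zero_mul, one_mul, zero_add] at e1 e2
    rw [← e1, ← e2]; exact hd
  · set D := 1 - c1 - c2 with hD
    have hDpos : 0 < D := by linarith
    set α := (1 - w1 - w2) / D with hα
    have hα0 : 0 ≤ α := div_nonneg (by linarith) hDpos.le
    have hαD : α * D = 1 - w1 - w2 := by rw [hα]; field_simp
    have hασ : α ≤ σ := by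
      rw [hα, div_le_iff₀ hDpos, hD]
      have : 0 ≤ τ * (κ - 1) := mul_nonneg hτ (by linarith)
      nlinarith
    have hβ : 0 ≤ w1 - α * c1 := by
      have : 0 ≤ (σ - α) * c1 := mul_nonneg (by linarith) a1
      have : 0 ≤ τ * κ := mul_nonneg hτ (by linarith)
      nlinarith
    have hγ : 0 ≤ w2 - α * c2 := by
      have : 0 ≤ (σ - α) * c2 := mul_nonneg (by linarith) a2
      nlinarith
    have := hcv.sum_mem (t := Finset.univ) (w := ![α, w1 - α * c1, w2 - α * c2])
      (z := ![(c1, c2), (1, 0), (0, 1)]) (by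
        intro i _; fin_cases i
        · exact hα0
        · exact hβ
        · exact hγ)
      (by
        simp only [Fin.sum_univ_three, Matrix.cons_val_zero, Matrix.cons_val_one,
          Matrix.cons_val]
        rw [hD] at hαD; linarith)
      (by
        intro i _; fin_cases i
        · exact hd
        · exact subset_convexHull _ _ h1
        · exact subset_convexHull _ _ h2)
    simpa [Fin.sum_univ_three] using this

lemma phi_e1 (a b : ℝ) (h : (a, b) ∈ U0) : phi a b (1, 0) = (a, b) := by
  have : 1 - a ≠ 0 := by have := h.2.1; have := h.2.2; simp only at *; intro h; linarith
  rw [phi_apply]; ext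
  · simp
  · simp only; field_simp; ring

lemma phi_e2 (a b : ℝ) : phi a b (0, 1) = (0, 1) := by
  rw [phi_apply]; ext <;> simp

lemma phi_far (a b : ℝ) (h : (a, b) ∈ U0) : phi a b (1 / a, 0) = (1, 0) := by
  have : a ≠ 0 := h.1.ne'
  rw [phi_apply]; ext
  · simp; field_simp
  · simp only; field_simp; ring

lemma psi_mem (a b : ℝ) (z : ℝ × ℝ) (hz : z ∈ T) :
    psi a b z ∈ convexHull ℝ {(a, b), (1, 0), (0, 1)} := by
  have : psi a b z ∈ psi a b '' T := ⟨z, hz, rfl⟩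
  rw [T, AffineMap.image_convexHull] at this
  convert this using 2
  simp only [Set.image_insert_eq, Set.image_singleton, psi_apply]
  norm_num

lemma phi_slope (a b : ℝ) (h : (a, b) ∈ U0) (z : ℝ × ℝ) (hz : z ∈ U0) :
    b / (1 - a) < slope0 (phi a b z) := by
  have : phi a b z ∈ phi a b '' U0 := ⟨z, hz, rfl⟩
  rw [phi_image a b h] at this
  exact this.2.1

lemma psi_slope (a b : ℝ) (h : (a, b) ∈ U0) (z : ℝ × ℝ) (hz : z ∈ U0) :
    b / (1 - a) < slope0 (psi a b z) := by
  have : psi a b z ∈ psi a b '' U0 := ⟨z, hz, rfl⟩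
  rw [psi_image a b h] at this
  exact this.2.1

lemma phi_mem_U0 (a b : ℝ) (h : (a, b) ∈ U0) (z : ℝ × ℝ) (hz : z ∈ U0) :
    phi a b z ∈ U0 := by
  have : phi a b z ∈ phi a b '' U0 := ⟨z, hz, rfl⟩
  rw [phi_image a b h] at this
  exact this.1

lemma psi_mem_U0 (a b : ℝ) (h : (a, b) ∈ U0) (z : ℝ × ℝ) (hz : z ∈ U0) :
    psi a b z ∈ U0 := by
  have : psi a b z ∈ psi a b '' U0 := ⟨z, hz, rfl⟩
  rw [psi_image a b h] at this
  exact this.1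

/-- A point of minimal slope is not in the hull of the others. -/
lemma min_slope_notMem (a b : ℝ) (h : (a, b) ∈ U0) (A : Set (ℝ × ℝ))
    (hA : ∀ z ∈ A, z ∈ U0 ∧ b / (1 - a) < slope0 z) :
    (a, b) ∉ convexHull ℝ (A ∪ {(1, 0), (0, 1)}) := by
  obtain ⟨hs0, hs1⟩ := slope_lt a b h
  set s := b / (1 - a) with hs
  have h1a : 0 < 1 - a := by
    have h2 := h.2.1; have h3 := h.2.2; simp only at h2 h3; linarith
  have hb : b = s * (1 - a) := by rw [hs]; field_simp
  have hconv : Convex ℝ {z : ℝ × ℝ | s * (1 - z.1) < z.2 ∨ z = (1, 0)} := by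
    rintro ⟨x, y⟩ hz ⟨x', y'⟩ hz' α β hα hβ hαβ
    rcases hz with hz | hz
    · simp only at hz
      rcases hz' with hz' | hz'
      · simp only at hz'
        left
        simp only [Prod.smul_mk, smul_eq_mul, Prod.mk_add_mk]
        rcases eq_or_lt_of_le hα with h0 | h0
        · have : β = 1 := by linarith
          subst this; rw [← h0]; linarith
        · nlinarith
      · obtain ⟨rfl, rfl⟩ := Prod.mk.inj hz'
        rcases eq_or_lt_of_le hα with h0 | h0
        · have : β = 1 := by linarith
          subst this; rw [← h0]; right; simp
        · left
          simp only [Prod.smul_mk, smul_eq_mul, Prod.mk_add_mk]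
          have : β = 1 - α := by linarith
          subst this
          nlinarith
    · obtain ⟨rfl, rfl⟩ := Prod.mk.inj hz
      rcases hz' with hz' | hz'
      · simp only at hz'
        rcases eq_or_lt_of_le hβ with h0 | h0
        · have : α = 1 := by linarith
          subst this; rw [← h0]; right; simp
        · left
          simp only [Prod.smul_mk, smul_eq_mul, Prod.mk_add_mk]
          have : α = 1 - β := by linarith
          subst this
          nlinarith
      · obtain ⟨rfl, rfl⟩ := Prod.mk.inj hz'
        right
        simp [hαβ]
  intro hmem
  have hsub : A ∪ {(1, 0), (0, 1)} ⊆ {z : ℝ × ℝ | s * (1 - z.1) < z.2 ∨ z = (1, 0)} := by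
    rintro z (hz | hz)
    · left
      obtain ⟨hU, hsl⟩ := hA z hz
      rw [slope0, lt_div_iff₀ (by linarith [hU.2.1, hU.2.2])] at hsl
      exact hsl
    · rcases hz with rfl | rfl
      · right; rfl
      · left; simpa using hs1
  rcases convexHull_min hsub hconv hmem with h6 | h6
  · simp only at h6; linarith
  · obtain ⟨h7, -⟩ := Prod.mk.inj h6
    linarith

open Classical in
lemma core {m : ℕ} (a b : ℝ) (h : (a, b) ∈ U0) (i0 : Fin (m + 1)) (J : Finset (Fin m))
    (ω : Fin m → ℝ × ℝ) (hω : ∀ i, ω i ∈ U0) :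
    M (Fin.insertNth (α := fun _ => ℝ × ℝ) i0 (a, b)
      (fun k => if k ∈ J then phi a b (ω k) else psi a b (ω k))) =
      M (fun i : J => ω i) + 1 := by
  set η : Fin m → ℝ × ℝ := fun k => if k ∈ J then phi a b (ω k) else psi a b (ω k) with hη
  set ζ : Fin (m + 1) → ℝ × ℝ := Fin.insertNth (α := fun _ => ℝ × ℝ) i0 (a, b) η with hζ
  have hζ0 : ζ i0 = (a, b) := by simp [hζ]
  have hζs : ∀ k, ζ (i0.succAbove k) = η k := by intro k; simp [hζ]
  have hinj : Function.Injective (phi a b) := aff_injective _ _ _ _ _ _ (phi_det a b h)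
  have E0 : ExtI ζ i0 := by
    unfold ExtI
    rw [hζ0]
    apply min_slope_notMem a b h
    rintro _ ⟨j, hj, rfl⟩
    obtain ⟨k, rfl⟩ := Fin.exists_succAbove_eq hj
    rw [hζs, hη]
    dsimp only
    split_ifs
    · exact ⟨phi_mem_U0 a b h _ (hω k), phi_slope a b h _ (hω k)⟩
    · exact ⟨psi_mem_U0 a b h _ (hω k), psi_slope a b h _ (hω k)⟩
  have E1 : ∀ k, k ∉ J → ¬ ExtI ζ (i0.succAbove k) := by
    intro k hk
    unfold ExtI
    rw [not_not, hζs, hη]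
    simp only [hk, if_false]
    refine convexHull_mono ?_ (psi_mem a b (ω k) (U0_subset_T (hω k)))
    rintro z (rfl | rfl | rfl)
    · left; exact ⟨i0, by simpa using (Fin.succAbove_ne i0 k).symm, hζ0⟩
    · right; simp
    · right; simp
  have E2 : ∀ k : J, ExtI ζ (i0.succAbove k) ↔ ExtI (fun i : J => ω i) k := by
    intro k
    unfold ExtI
    rw [not_iff_not, hζs]
    have hηk : η k = phi a b (ω k) := by simp [hη]
    rw [hηk]
    set Q : Set (ℝ × ℝ) := (fun i : J => ω i) '' {k}ᶜ ∪ {(1, 0), (0, 1)} with hQ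
    have hQ1 : ((1 : ℝ), (0 : ℝ)) ∈ Q := Or.inr (by simp)
    have hQ2 : ((0 : ℝ), (1 : ℝ)) ∈ Q := Or.inr (by simp)
    constructor
    · intro hm
      have hsub : ζ '' {i0.succAbove ↑k}ᶜ ∪ {(1, 0), (0, 1)} ⊆
          convexHull ℝ (phi a b '' (insert (1 / a, 0) Q)) := by
        have m0 : (a, b) ∈ phi a b '' (insert (1 / a, 0) Q) :=
          ⟨(1, 0), Or.inr hQ1, phi_e1 a b h⟩
        have m1 : ((1 : ℝ), (0 : ℝ)) ∈ phi a b '' (insert (1 / a, 0) Q) :=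
          ⟨(1 / a, 0), Or.inl rfl, phi_far a b h⟩
        have m2 : ((0 : ℝ), (1 : ℝ)) ∈ phi a b '' (insert (1 / a, 0) Q) :=
          ⟨(0, 1), Or.inr hQ2, phi_e2 a b⟩
        rintro _ (⟨j, hj, rfl⟩ | hz)
        · by_cases hj0 : j = i0
          · rw [hj0, hζ0]; exact subset_convexHull _ _ m0
          · obtain ⟨l, rfl⟩ := Fin.exists_succAbove_eq hj0
            rw [hζs]
            by_cases hl : l ∈ J
            · apply subset_convexHull
              refine ⟨ω l, Or.inr (Or.inl ⟨⟨l, hl⟩, ?_, rfl⟩), by simp [hη, hl]⟩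
              simp only [Set.mem_compl_iff, Set.mem_singleton_iff] at hj ⊢
              rintro rfl
              exact hj rfl
            · have : η l = psi a b (ω l) := by simp [hη, hl]
              rw [this]
              refine convexHull_mono ?_ (psi_mem a b (ω l) (U0_subset_T (hω l)))
              rintro z (rfl | rfl | rfl)
              exacts [m0, m1, m2]
        · rcases hz with rfl | rfl
          · exact subset_convexHull _ _ m1
          · exact subset_convexHull _ _ m2
      have hm2 := convexHull_min hsub (convex_convexHull ℝ _) hm
      rw [← AffineMap.image_convexHull] at hm2
      obtain ⟨w, hw, hwe⟩ := hm2
      rw [hinj hwe] at hw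
      have ha1 : a < 1 := by have h2 := h.2.1; have h3 := h.2.2; simp only at h2 h3; linarith
      refine hull_drop (1 / a) ?_ Q ?_ hQ1 hQ2 _ (U0_subset_T (hω k)) hw
      · rw [lt_div_iff₀ h.1]; simpa using ha1
      · rintro _ (⟨j, -, rfl⟩ | hz)
        · exact U0_subset_T (hω j)
        · rcases hz with rfl | rfl <;> (rw [T_eq]; norm_num)
    · intro hm
      have hm2 : phi a b (ω k) ∈ phi a b '' convexHull ℝ Q := ⟨_, hm, rfl⟩
      rw [AffineMap.image_convexHull] at hm2
      refine convexHull_mono ?_ hm2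
      rintro _ ⟨z, (⟨j, hj, rfl⟩ | hz), rfl⟩
      · left
        refine ⟨i0.succAbove j, ?_, ?_⟩
        · simp only [Set.mem_compl_iff, Set.mem_singleton_iff] at hj ⊢
          intro he
          exact hj (Subtype.ext (Fin.succAbove_right_injective he))
        · rw [hζs]; simp [hη]
      · rcases hz with rfl | rfl
        · left
          exact ⟨i0, by simpa using (Fin.succAbove_ne i0 k).symm, by rw [hζ0, phi_e1 a b h]⟩
        · right; rw [phi_e2]; simp
  unfold M
  rw [Fin.sum_univ_succAbove _ i0, if_pos E0, add_comm]
  congr 1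
  have : ∀ k : J, (if ExtI (fun i : J => ω i) k then 1 else 0) =
      (fun l : Fin m => if ExtI ζ (i0.succAbove l) then 1 else 0) k := by
    intro k; simp only [E2 k]
  rw [Finset.sum_congr rfl fun k _ => this k,
    Finset.sum_coe_sort J (fun l : Fin m => if ExtI ζ (i0.succAbove l) then 1 else 0)]
  symm
  apply Finset.sum_subset (Finset.subset_univ _)
  intro k _ hk
  simp [E1 k hk]

/-! ### The recursion -/

lemma beta_nat (b : ℕ) : ∀ a : ℕ, ∫ x in (0:ℝ)..1, x ^ a * (1 - x) ^ b =
    (a.factorial * b.factorial : ℝ) / (a + b + 1).factorial := by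
  induction b with
  | zero =>
    intro a
    simp only [pow_zero, mul_one, integral_pow, Nat.factorial_zero, add_zero, Nat.factorial_succ]
    have : (a.factorial : ℝ) ≠ 0 := by exact_mod_cast a.factorial_ne_zero
    push_cast
    field_simp
    simp
  | succ b ih =>
    intro a
    have hd : ∀ x ∈ Set.uIcc (0:ℝ) 1, HasDerivAt (fun x : ℝ => x ^ (a + 1) * (1 - x) ^ (b + 1))
        (((a : ℝ) + 1) * (x ^ a * (1 - x) ^ (b + 1)) - ((b : ℝ) + 1) * (x ^ (a + 1) * (1 - x) ^ b)) x := by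
      intro x _
      have h1 : HasDerivAt (fun x : ℝ => x ^ (a + 1)) (((a : ℝ) + 1) * x ^ a) x := by
        simpa using hasDerivAt_pow (a + 1) x
      have h2 : HasDerivAt (fun x : ℝ => (1 - x) ^ (b + 1)) (((b : ℝ) + 1) * (1 - x) ^ b * (-1)) x := by
        have := ((hasDerivAt_id x).const_sub 1).fun_pow (b + 1)
        simpa using this
      exact (h1.fun_mul h2).congr_deriv (by ring)
    have h := intervalIntegral.integral_eq_sub_of_hasDerivAt hd
      (Continuous.intervalIntegrable (by fun_prop) _ _)
    rw [intervalIntegral.integral_sub (Continuous.intervalIntegrable (by fun_prop) _ _)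
      (Continuous.intervalIntegrable (by fun_prop) _ _), intervalIntegral.integral_const_mul,
      intervalIntegral.integral_const_mul, ih (a + 1)] at h
    simp only [one_pow, sub_self, ne_eq, Nat.add_eq_zero_iff, one_ne_zero, and_false,
      not_false_eq_true, zero_pow, mul_zero, sub_zero, zero_mul] at h
    have hf : ((a + 1 + b + 1).factorial : ℝ) ≠ 0 := by exact_mod_cast Nat.factorial_ne_zero _
    have e : a + (b + 1) + 1 = a + 1 + b + 1 := by ring
    rw [e]
    have ha : (a : ℝ) + 1 ≠ 0 := by positivity
    have h3 : ((a : ℝ) + 1) * (∫ x in (0:ℝ)..1, x ^ a * (1 - x) ^ (b + 1)) =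
      ((a : ℝ) + 1) * ((a.factorial * (b + 1).factorial : ℝ) / (a + 1 + b + 1).factorial) := by
      rw [sub_eq_zero.mp h, Nat.factorial_succ a, Nat.factorial_succ b]
      push_cast
      ring
    exact mul_left_cancel₀ ha h3

/-- The two areas. -/
lemma int_areas (m j : ℕ) (hj : j ≤ m) :
    ∫⁻ X, ENNReal.ofReal (X.1 * (1 - X.2 / (1 - X.1))) ^ j *
      ENNReal.ofReal (1 - X.1 - X.2) ^ (m - j) ∂μT =
    ENNReal.ofReal (2 / (m + 1) * ((j.factorial * (m + 1 - j).factorial : ℝ) /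
      (m + 2).factorial)) := by
  rw [μT_eq, lintegral_smul_measure, lintegral_U0 _ (by fun_prop)]
  have hin : ∀ x ∈ Set.Ioo (0:ℝ) 1, ∫⁻ y in Set.Ioo (0:ℝ) (1 - x),
      ENNReal.ofReal ((x, y).1 * (1 - (x, y).2 / (1 - (x, y).1))) ^ j *
      ENNReal.ofReal (1 - (x, y).1 - (x, y).2) ^ (m - j) =
      ENNReal.ofReal (1 / (m + 1) * (x ^ j * (1 - x) ^ (m + 1 - j))) := by
    intro x hx
    have hx0 : 0 < x := hx.1
    have hx1 : 0 < 1 - x := by linarith [hx.2]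
    have e1 : ∀ y ∈ Set.Ioo (0:ℝ) (1 - x),
        ENNReal.ofReal ((x, y).1 * (1 - (x, y).2 / (1 - (x, y).1))) ^ j *
        ENNReal.ofReal (1 - (x, y).1 - (x, y).2) ^ (m - j) =
        ENNReal.ofReal ((x / (1 - x)) ^ j * (1 - x - y) ^ m) := by
      intro y hy
      have hy1 : 0 < 1 - x - y := by linarith [hy.2]
      have e : x * (1 - y / (1 - x)) = x / (1 - x) * (1 - x - y) := by field_simp
      simp only [e]
      rw [← ENNReal.ofReal_pow (by positivity), ← ENNReal.ofReal_pow hy1.le,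
        ← ENNReal.ofReal_mul (by positivity), mul_pow, mul_assoc, ← pow_add,
        Nat.add_sub_of_le hj]
    rw [setLIntegral_congr_fun measurableSet_Ioo e1,
      ← ofReal_integral_eq_lintegral_ofReal]
    · congr 1
      rw [← integral_Ioc_eq_integral_Ioo, ← intervalIntegral.integral_of_le hx1.le,
        intervalIntegral.integral_const_mul,
        intervalIntegral.integral_comp_sub_left (fun u => u ^ m) (1 - x)]
      simp only [sub_self, sub_zero, integral_pow]
      have : (1 - x) ^ (m + 1) = (1 - x) ^ j * (1 - x) ^ (m + 1 - j) := by
        rw [← pow_add]; congr 1; omega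
      rw [this, div_pow]
      have : (1 - x) ^ j ≠ 0 := by positivity
      field_simp
      simp
    · exact (Continuous.integrableOn_Icc (by fun_prop)).mono_set Set.Ioo_subset_Icc_self
    · refine (ae_restrict_iff' measurableSet_Ioo).mpr (Filter.Eventually.of_forall fun y hy => ?_)
      have hy1 : 0 < 1 - x - y := by linarith [hy.2]
      simp only [Pi.zero_apply]
      positivity
  rw [setLIntegral_congr_fun measurableSet_Ioo hin, ← ofReal_integral_eq_lintegral_ofReal]
  · rw [← integral_Ioc_eq_integral_Ioo, ← intervalIntegral.integral_of_le (by norm_num),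
      intervalIntegral.integral_const_mul, beta_nat, smul_eq_mul,
      show (2 : ENNReal) = ENNReal.ofReal 2 by simp, ← ENNReal.ofReal_mul (by norm_num)]
    congr 1
    rw [show j + (m + 1 - j) + 1 = m + 2 by omega]
    ring
  · exact (Continuous.integrableOn_Icc (by fun_prop)).mono_set Set.Ioo_subset_Icc_self
  · refine (ae_restrict_iff' measurableSet_Ioo).mpr (Filter.Eventually.of_forall fun x hx => ?_)
    have hx0 : 0 < x := hx.1
    have hx1 : 0 < 1 - x := by linarith [hx.2]
    simp only [Pi.zero_apply]
    positivity

lemma inner_int {m : ℕ} (a b : ℝ) (h : (a, b) ∈ U0) (i0 : Fin (m + 1)) (f : ℕ → ENNReal) :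
    ∫⁻ η in Set.univ.pi (fun _ => {z | slope0 (a, b) < slope0 z}),
      f (M (Fin.insertNth (α := fun _ => ℝ × ℝ) i0 (a, b) η)) ∂(P m) =
    ∑ j ∈ Finset.range (m + 1), (m.choose j : ENNReal) *
      ((ENNReal.ofReal (a * (1 - b / (1 - a))) ^ j * ENNReal.ofReal (1 - a - b) ^ (m - j)) *
        ∫⁻ ω, f (M ω + 1) ∂(P j)) := by
  classical
  set F : (Fin m → ℝ × ℝ) → ENNReal :=
    fun η => f (M (Fin.insertNth (α := fun _ => ℝ × ℝ) i0 (a, b) η)) with hF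
  have hFm : Measurable F := by
    refine (measurable_from_top (f := f)).comp (measurable_M.comp ?_)
    refine measurable_pi_lambda _ fun k => ?_
    rcases Fin.eq_self_or_eq_succAbove i0 k with rfl | ⟨l, rfl⟩
    · simp
    · simpa using measurable_pi_apply l
  have mphi : Measurable (phi a b) := (aff_continuous ..).measurable
  have mpsi : Measurable (psi a b) := (aff_continuous ..).measurable
  set c1 := (a * (1 - b / (1 - a))).toNNReal with hc1
  set c2 := (1 - a - b).toNNReal with hc2
  have hp1 : IsProbabilityMeasure (Measure.map (phi a b) μT) :=
    Measure.isProbabilityMeasure_map mphi.aemeasurable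
  have hp2 : IsProbabilityMeasure (Measure.map (psi a b) μT) :=
    Measure.isProbabilityMeasure_map mpsi.aemeasurable
  have hdec : μT.restrict {z | slope0 (a, b) < slope0 z} =
      c1 • Measure.map (phi a b) μT + c2 • Measure.map (psi a b) μT := measure_decomp a b h
  have hpiece : ∀ J : Finset (Fin m),
      Measure.pi (fun i => if i ∈ J then c1 • Measure.map (phi a b) μT
        else c2 • Measure.map (psi a b) μT) =
      (c1 ^ J.card * c2 ^ (m - J.card)) •
        Measure.map (fun (ω : Fin m → ℝ × ℝ) i =>
          (if i ∈ J then phi a b else psi a b : ℝ × ℝ → ℝ × ℝ) (ω i)) (P m) := by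
    intro J
    have hmeas : ∀ i, Measurable (if i ∈ J then phi a b else psi a b : ℝ × ℝ → ℝ × ℝ) := by
      intro i; split_ifs <;> assumption
    have hpr : ∀ i, IsProbabilityMeasure
        (Measure.map (if i ∈ J then phi a b else psi a b : ℝ × ℝ → ℝ × ℝ) μT) :=
      fun i => Measure.isProbabilityMeasure_map (hmeas i).aemeasurable
    rw [P, Measure.pi_map_pi (fun i => (hmeas i).aemeasurable)]
    have : (c1 ^ J.card * c2 ^ (m - J.card)) = ∏ i : Fin m, if i ∈ J then c1 else c2 := by
      rw [← Finset.prod_mul_prod_compl J]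
      rw [Finset.prod_congr rfl (g := fun _ => c1) (fun i hi => by simp [hi]),
        Finset.prod_congr rfl (s₁ := Jᶜ) (g := fun _ => c2)
          (fun i hi => by simp [Finset.mem_compl.mp hi])]
      simp [Finset.card_compl]
    rw [this, ← pi_smul_measure]
    congr 1
    ext1 i
    split_ifs <;> rfl
  have hae : ∀ᵐ ω ∂(P m), ∀ i, ω i ∈ U0 := by
    rw [ae_all_iff]; intro i
    exact (measurePreserving_eval (fun _ : Fin m => μT) i).quasiMeasurePreserving.ae ae_U0
  have hJ : ∀ J : Finset (Fin m),
      ∫⁻ η, F η ∂(Measure.pi (fun i => if i ∈ J then c1 • Measure.map (phi a b) μT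
        else c2 • Measure.map (psi a b) μT)) =
      ((c1 : ENNReal) ^ J.card * (c2 : ENNReal) ^ (m - J.card)) *
        ∫⁻ ω, f (M ω + 1) ∂(P J.card) := by
    intro J
    have hmeas : ∀ i, Measurable (if i ∈ J then phi a b else psi a b : ℝ × ℝ → ℝ × ℝ) := by
      intro i; split_ifs <;> assumption
    have hmm : Measurable (fun (ω : Fin m → ℝ × ℝ) i =>
        (if i ∈ J then phi a b else psi a b : ℝ × ℝ → ℝ × ℝ) (ω i)) :=
      measurable_pi_lambda _ fun i => (hmeas i).comp (measurable_pi_apply i)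
    rw [hpiece J, lintegral_smul_measure, lintegral_map hFm hmm,
      ← lintegral_M_sub J (fun n => f (n + 1)), ENNReal.smul_def, smul_eq_mul]
    push_cast
    congr 1
    refine lintegral_congr_ae ?_
    filter_upwards [hae] with ω hω
    rw [hF]
    dsimp only
    rw [← core a b h i0 J ω hω]
    congr 3
    ext1 i
    split_ifs <;> rfl
  rw [P, Measure.restrict_pi_pi, hdec, pi_add_measure, lintegral_finsetSum_measure]
  rw [Finset.sum_congr rfl fun J _ => hJ J, ← Finset.powerset_univ,
    Finset.sum_powerset_apply_card (fun j => ((c1 : ENNReal) ^ j * (c2 : ENNReal) ^ (m - j)) *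
        ∫⁻ ω, f (M ω + 1) ∂(P j))]
  simp only [Finset.card_univ, Fintype.card_fin, nsmul_eq_mul]
  rfl

/-- Almost sure general position. -/
lemma ae_generic (n : ℕ) : ∀ᵐ ω ∂(P n), (∀ i, ω i ∈ U0) ∧
    (∀ i j, i ≠ j → slope0 (ω i) ≠ slope0 (ω j)) := by
  have hae : ∀ᵐ ω ∂(P n), ∀ i, ω i ∈ U0 := by
    rw [ae_all_iff]; intro i
    exact (measurePreserving_eval (fun _ : Fin n => μT) i).quasiMeasurePreserving.ae ae_U0
  have hm : MeasurableSet {p : (ℝ × ℝ) × (ℝ × ℝ) | slope0 p.1 ≠ slope0 p.2} :=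
    (measurableSet_eq_fun (measurable_slope0.comp measurable_fst)
      (measurable_slope0.comp measurable_snd)).compl
  have h2 := pi_ae_pair (ι := Fin n) μT _ hm (fun x => by
    filter_upwards [ae_slope_ne (slope0 x)] with y hy
    exact fun h => hy h.symm)
  filter_upwards [hae, h2] with ω h3 h4
  exact ⟨h3, h4⟩

lemma recursion (m : ℕ) (f : ℕ → ENNReal) :
    ∫⁻ ω, f (M ω) ∂(P (m + 1)) = ∑ j ∈ Finset.range (m + 1),
      ENNReal.ofReal (2 * (m + 1 - j) / ((m + 1) * (m + 2))) * ∫⁻ ω, f (M ω + 1) ∂(P j) := by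
  classical
  set E : Fin (m + 1) → Set (Fin (m + 1) → ℝ × ℝ) :=
    fun i => {ω | ∀ k, slope0 (ω i) < slope0 (ω (i.succAbove k))} with hE
  have hEm : ∀ i, MeasurableSet (E i) := by
    intro i
    have : E i = ⋂ k, {ω | slope0 (ω i) < slope0 (ω (i.succAbove k))} := by ext; simp [hE]
    rw [this]
    refine MeasurableSet.iInter fun k => measurableSet_lt ?_ ?_
    · exact measurable_slope0.comp (measurable_pi_apply _)
    · exact measurable_slope0.comp (measurable_pi_apply _)
  have hfm : Measurable fun ω : Fin (m + 1) → ℝ × ℝ => f (M ω) :=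
    (measurable_from_top).comp measurable_M
  have h1 : ∫⁻ ω, f (M ω) ∂(P (m + 1)) = ∑ i, ∫⁻ ω, (E i).indicator (fun ω => f (M ω)) ω ∂(P (m + 1)) := by
    rw [← lintegral_finsetSum _ (fun i _ => hfm.indicator (hEm i))]
    refine lintegral_congr_ae ?_
    filter_upwards [ae_generic (m + 1)] with ω ⟨_, hω⟩
    obtain ⟨i, -, hi⟩ := Finset.exists_min_image Finset.univ (fun i => slope0 (ω i))
      ⟨0, Finset.mem_univ _⟩
    have hiE : ω ∈ E i := fun k => lt_of_le_of_ne (hi _ (Finset.mem_univ _))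
      (hω _ _ (Fin.succAbove_ne i k).symm)
    rw [Finset.sum_eq_single i]
    · rw [Set.indicator_of_mem hiE]
    · intro j _ hj
      rw [Set.indicator_of_notMem]
      intro hjE
      obtain ⟨k, hk⟩ := Fin.exists_succAbove_eq hj.symm
      have := hjE k
      rw [hk] at this
      exact absurd (hi j (Finset.mem_univ _)) (not_le.mpr this)
    · simp
  have h2 : ∀ i, ∫⁻ ω, (E i).indicator (fun ω => f (M ω)) ω ∂(P (m + 1)) =
      ∑ j ∈ Finset.range (m + 1), (m.choose j : ENNReal) *
      (ENNReal.ofReal (2 / (m + 1) * ((j.factorial * (m + 1 - j).factorial : ℝ) /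
      (m + 2).factorial)) * ∫⁻ ω, f (M ω + 1) ∂(P j)) := by
    intro i
    have hmp := (measurePreserving_piFinSuccAbove (fun _ : Fin (m + 1) => μT) i).symm
    have hG := hmp.lintegral_comp (hfm.indicator (hEm i))
    unfold P at hG ⊢
    have hmm : Measurable (fun a => (E i).indicator (fun ω => f (M ω))
        ((MeasurableEquiv.piFinSuccAbove (fun _ => ℝ × ℝ) i).symm a)) :=
      (hfm.indicator (hEm i)).comp hmp.measurable
    rw [← hG, lintegral_prod _ hmm.aemeasurable]
    have h3 : ∀ X ∈ U0, ∫⁻ η, (E i).indicator (fun ω => f (M ω))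
        ((MeasurableEquiv.piFinSuccAbove (fun _ => ℝ × ℝ) i).symm (X, η)) ∂(P m) =
        ∑ j ∈ Finset.range (m + 1), (m.choose j : ENNReal) *
        ((ENNReal.ofReal (X.1 * (1 - X.2 / (1 - X.1))) ^ j *
          ENNReal.ofReal (1 - X.1 - X.2) ^ (m - j)) * ∫⁻ ω, f (M ω + 1) ∂(P j)) := by
      rintro ⟨a, b⟩ hX
      rw [← inner_int a b hX i f, ← lintegral_indicator]
      · refine lintegral_congr fun η => ?_
        have : ((MeasurableEquiv.piFinSuccAbove (fun _ => ℝ × ℝ) i).symm ((a, b), η)) =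
          Fin.insertNth (α := fun _ => ℝ × ℝ) i (a, b) η := rfl
        rw [this]
        simp only [Set.indicator]
        congr 1
        simp [hE]
      · refine MeasurableSet.univ_pi fun _ => measurableSet_lt measurable_const measurable_slope0
    calc _ = ∫⁻ X, ∑ j ∈ Finset.range (m + 1), (m.choose j : ENNReal) *
        ((ENNReal.ofReal (X.1 * (1 - X.2 / (1 - X.1))) ^ j *
          ENNReal.ofReal (1 - X.1 - X.2) ^ (m - j)) * ∫⁻ ω, f (M ω + 1) ∂(P j)) ∂μT := by
          refine lintegral_congr_ae ?_
          filter_upwards [ae_U0] with X hX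
          exact h3 X hX
      _ = _ := by
        rw [lintegral_finsetSum _ (fun j _ => by fun_prop)]
        refine Finset.sum_congr rfl fun j hj => ?_
        rw [lintegral_const_mul _ (by fun_prop), lintegral_mul_const _ (by fun_prop),
          int_areas m j (by simpa [Nat.lt_succ_iff] using hj)]
        rfl
  rw [h1, Finset.sum_congr rfl fun i _ => h2 i, Finset.sum_const, Finset.card_univ,
    Fintype.card_fin, Finset.smul_sum]
  refine Finset.sum_congr rfl fun j hj => ?_
  have hjm : j ≤ m := by simpa [Nat.lt_succ_iff] using hj
  rw [nsmul_eq_mul, ← mul_assoc, ← mul_assoc]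
  congr 1
  rw [← ENNReal.ofReal_natCast, ← ENNReal.ofReal_natCast, ← ENNReal.ofReal_mul (by positivity),
    ← ENNReal.ofReal_mul (by positivity)]
  congr 1
  rw [Nat.cast_choose ℝ hjm, Nat.factorial_succ (m + 1), Nat.factorial_succ m,
    show m + 1 - j = (m - j) + 1 by omega, Nat.factorial_succ (m - j)]
  have k1 : (m.factorial : ℝ) ≠ 0 := by exact_mod_cast Nat.factorial_ne_zero _
  have k2 : (j.factorial : ℝ) ≠ 0 := by exact_mod_cast Nat.factorial_ne_zero _
  have k3 : ((m - j).factorial : ℝ) ≠ 0 := by exact_mod_cast Nat.factorial_ne_zero _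
  push_cast [hjm]
  field_simp
  ring

/-! ### Extreme points -/

lemma ext_iff_notMem {F : Type*} [AddCommGroup F] [Module ℝ F] (A : Set F) (x : F) (hx : x ∈ A)
    (hne : (A \ {x}).Nonempty) :
    x ∈ Set.extremePoints ℝ (convexHull ℝ A) ↔ x ∉ convexHull ℝ (A \ {x}) := by
  constructor
  · intro h h2
    rw [(convex_convexHull ℝ A).mem_extremePoints_iff_mem_sdiff_convexHull_sdiff] at h
    have hs : A \ {x} ⊆ convexHull ℝ A \ {x} := fun z hz => ⟨subset_convexHull ℝ A hz.1, hz.2⟩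
    exact h.2 (convexHull_mono hs h2)
  · intro h
    have hA : A = insert x (A \ {x}) := by
      ext z
      by_cases hz : z = x
      · simp [hz, hx]
      · simp [hz]
    set B := A \ {x} with hB
    have hmem : ∀ z ∈ convexHull ℝ A, ∃ α : ℝ, 0 ≤ α ∧ ∃ d ∈ convexHull ℝ B,
        z = (1 - α) • x + α • d := by
      intro z hz
      rw [hA, convexHull_insert hne, mem_convexJoin] at hz
      obtain ⟨_, rfl, d, hd, τ, σ, hτ, hσ, hs, he⟩ := hz
      refine ⟨σ, hσ, d, hd, ?_⟩
      rw [← he, show τ = 1 - σ by linarith]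
    rw [mem_extremePoints_iff_left]
    refine ⟨subset_convexHull ℝ A hx, fun a ha b hb hab => ?_⟩
    obtain ⟨α, hα, c, hc, rfl⟩ := hmem a ha
    obtain ⟨β, hβ, d, hd, rfl⟩ := hmem b hb
    obtain ⟨u, v, hu, hv, huv, he⟩ := hab
    rcases eq_or_lt_of_le hα with h0 | h0
    · simp [← h0]
    · exfalso
      apply h
      have hs : 0 < u * α + v * β := by positivity
      have e1 : (u * α + v * β) • x = (u * α) • c + (v * β) • d := by
        have hv' : v = 1 - u := by linarith
        subst hv'
        have e2 : (u * α + (1 - u) * β) • x - ((u * α) • c + ((1 - u) * β) • d) =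
            x - (u • ((1 - α) • x + α • c) + (1 - u) • ((1 - β) • x + β • d)) := by module
        rw [he, sub_self] at e2
        exact sub_eq_zero.mp e2
      have e3 : x = (u * α / (u * α + v * β)) • c + (v * β / (u * α + v * β)) • d := by
        have := congrArg (fun z => (u * α + v * β)⁻¹ • z) e1
        simp only [smul_smul, inv_mul_cancel₀ hs.ne', one_smul, smul_add] at this
        rw [this]
        congr 2 <;> ring
      rw [e3]
      refine convex_convexHull ℝ B hc hd (by positivity) (by positivity) ?_
      field_simp

lemma corner1_ext : ((1 : ℝ), (0 : ℝ)) ∈ Set.extremePoints ℝ T := by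
  rw [mem_extremePoints_iff_left, T_eq]
  refine ⟨by simp, ?_⟩
  rintro ⟨a1, a2⟩ ⟨h1, h2, h3⟩ ⟨b1, b2⟩ ⟨k1, k2, k3⟩ ⟨u, v, hu, hv, huv, he⟩
  simp only [Prod.smul_mk, smul_eq_mul, Prod.mk_add_mk, Prod.mk.injEq] at he h1 h2 h3 k1 k2 k3
  obtain ⟨e1, e2⟩ := he
  have : 0 ≤ u * a2 := by positivity
  have : 0 ≤ v * b2 := by positivity
  have e3 : u * (1 - a1) + v * (1 - b1) = 0 := by linarith
  have : 0 ≤ u * (1 - a1) := mul_nonneg hu.le (by linarith)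
  have : 0 ≤ v * (1 - b1) := mul_nonneg hv.le (by linarith)
  have e4 : u * (1 - a1) = 0 := by linarith
  have e5 : 1 - a1 = 0 := by simpa [hu.ne'] using e4
  ext <;> simp <;> linarith

lemma corner2_ext : ((0 : ℝ), (1 : ℝ)) ∈ Set.extremePoints ℝ T := by
  rw [mem_extremePoints_iff_left, T_eq]
  refine ⟨by simp, ?_⟩
  rintro ⟨a2, a1⟩ ⟨h1, h2, h3⟩ ⟨b2, b1⟩ ⟨k1, k2, k3⟩ ⟨u, v, hu, hv, huv, he⟩
  simp only [Prod.smul_mk, smul_eq_mul, Prod.mk_add_mk, Prod.mk.injEq] at he h1 h2 h3 k1 k2 k3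
  obtain ⟨e2, e1⟩ := he
  have e3 : u * (1 - a1) + v * (1 - b1) = 0 := by linarith
  have : 0 ≤ u * (1 - a1) := mul_nonneg hu.le (by linarith)
  have : 0 ≤ v * (1 - b1) := mul_nonneg hv.le (by linarith)
  have e4 : u * (1 - a1) = 0 := by linarith
  have e5 : 1 - a1 = 0 := by simpa [hu.ne'] using e4
  ext <;> simp <;> linarith

lemma Tchain_subset {n : ℕ} {ω : Fin n → ℝ × ℝ} (h : ∀ i, ω i ∈ U0) : Tchain n ω ⊆ T := by
  unfold Tchain
  refine convexHull_min ?_ (convex_convexHull ℝ _)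
  rintro z (⟨i, rfl⟩ | hz | hz)
  · exact U0_subset_T (h i)
  · rw [hz]; exact corner1_ext.1
  · rw [hz]; exact corner2_ext.1

lemma ext_eq {n : ℕ} {ω : Fin n → ℝ × ℝ} (h : ∀ i, ω i ∈ U0) (hinj : Function.Injective ω) :
    Set.extremePoints ℝ (Tchain n ω) = {(1, 0), (0, 1)} ∪ ω '' {i | ExtI ω i} := by
  have hc : ∀ i, ω i ∉ ({(1, 0), (0, 1)} : Set (ℝ × ℝ)) := by
    rintro i (hi | hi)
    · have := (h i).2.1; rw [hi] at this; simp at this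
    · have := (h i).1; rw [Set.mem_singleton_iff.mp hi] at this; simp at this
  have key : ∀ i, ω i ∈ Set.extremePoints ℝ (Tchain n ω) ↔ ExtI ω i := by
    intro i
    have hd : (Set.range ω ∪ {(1, 0), (0, 1)}) \ {ω i} = ω '' {i}ᶜ ∪ {(1, 0), (0, 1)} := by
      ext z
      constructor
      · rintro ⟨⟨j, rfl⟩ | hz, hz2⟩
        · exact Or.inl ⟨j, fun hj => hz2 (by rw [Set.mem_singleton_iff.mp hj]; rfl), rfl⟩
        · exact Or.inr hz
      · rintro (⟨j, hj, rfl⟩ | hz)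
        · exact ⟨Or.inl ⟨j, rfl⟩, fun hj2 => hj (hinj hj2)⟩
        · exact ⟨Or.inr hz, fun hz2 => hc i (by rw [← Set.mem_singleton_iff.mp hz2]; exact hz)⟩
    unfold Tchain ExtI
    rw [ext_iff_notMem (Set.range ω ∪ {(1, 0), (0, 1)}) (ω i) (Or.inl ⟨i, rfl⟩)
      (by rw [hd]; exact ⟨(1, 0), by simp⟩), hd]
  have hsub := Tchain_subset h
  apply Set.Subset.antisymm
  · intro z hz
    rcases extremePoints_convexHull_subset hz with ⟨i, rfl⟩ | hz2
    · exact Or.inr ⟨i, (key i).mp hz, rfl⟩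
    · exact Or.inl hz2
  · rintro z (hz | ⟨i, hi, rfl⟩)
    · refine inter_extremePoints_subset_extremePoints_of_subset hsub
        ⟨subset_convexHull ℝ _ (Or.inr hz), ?_⟩
      rcases hz with rfl | rfl
      · exact corner1_ext
      · exact corner2_ext
    · exact (key i).mpr hi

lemma M_eq_card {n : ℕ} (ω : Fin n → ℝ × ℝ) : M ω = {i | ExtI ω i}.ncard := by
  classical
  unfold M
  rw [Finset.sum_boole, Set.ncard_eq_toFinset_card']
  simp only [Nat.cast_id]
  congr 1
  ext i
  simp

lemma N_eq_M {n : ℕ} {ω : Fin n → ℝ × ℝ} (h : ∀ i, ω i ∈ U0) (hinj : Function.Injective ω) :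
    N n ω = M ω := by
  unfold N
  have hc : ∀ i, ω i ∉ ({(1, 0), (0, 1)} : Set (ℝ × ℝ)) := by
    rintro i (hi | hi)
    · have := (h i).2.1; rw [hi] at this; simp at this
    · have := (h i).1; rw [Set.mem_singleton_iff.mp hi] at this; simp at this
  rw [ext_eq h hinj, Set.ncard_union_eq, Set.ncard_pair (by simp), Set.ncard_image_of_injective _ hinj,
    M_eq_card]
  · omega
  · rw [Set.disjoint_right]
    rintro _ ⟨i, _, rfl⟩
    exact hc i

lemma hull_iff {n : ℕ} {ω : Fin n → ℝ × ℝ} (h : ∀ i, ω i ∈ U0) (hinj : Function.Injective ω)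
    (S : Finset (Fin n)) :
    (∀ j, j ∉ S → ω j ∈ convexHull ℝ (Set.range (fun i : {i // i ∈ S} => ω i) ∪ {(1, 0), (0, 1)})) ↔
      ∀ i, ExtI ω i → i ∈ S := by
  have hr : Set.range (fun i : {i // i ∈ S} => ω i) = ω '' (S : Set (Fin n)) := by
    ext z; simp
  rw [hr]
  constructor
  · intro h1 i hi
    by_contra hiS
    refine hi (convexHull_mono ?_ (h1 i hiS))
    refine Set.union_subset_union_left _ (Set.image_mono ?_)
    intro j hj hji
    rw [Set.mem_singleton_iff] at hji
    subst hji
    exact hiS hj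
  · intro h1 j _
    have hcomp : IsCompact (Tchain n ω) :=
      Set.Finite.isCompact_convexHull (𝕜 := ℝ) (Set.toFinite _)
    have hkm := closure_convexHull_extremePoints hcomp (convex_convexHull ℝ _)
    rw [ext_eq h hinj, IsClosed.closure_eq
      (Set.Finite.isClosed_convexHull (𝕜 := ℝ) (Set.toFinite _))] at hkm
    have hj : ω j ∈ Tchain n ω := subset_convexHull ℝ _ (Or.inl ⟨j, rfl⟩)
    rw [← hkm] at hj
    refine convexHull_mono ?_ hj
    rw [Set.union_comm]
    exact Set.union_subset_union_left _ (Set.image_mono fun i hi => h1 i hi)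

lemma ae_good (n : ℕ) : ∀ᵐ ω ∂(P n), (∀ i, ω i ∈ U0) ∧ Function.Injective ω := by
  filter_upwards [ae_generic n] with ω ⟨h1, h2⟩
  refine ⟨h1, fun i j hij => ?_⟩
  by_contra hne
  exact h2 i j hne (by rw [hij])

/-! ### Moments of the volume -/

lemma measurable_vol (n : ℕ) : Measurable fun ω => μT (Tchain n ω) :=
  measurable_measure_prodMk_left (isClosed_hull (κ := Fin n)).measurableSet

lemma ae_V (n : ℕ) : ∀ᵐ ω ∂(P n), V n ω = (μT (Tchain n ω)).toReal := by
  filter_upwards [ae_good n] with ω ⟨h1, _⟩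
  unfold V μT
  rw [Measure.smul_apply, Measure.restrict_eq_self _ (Tchain_subset h1), smul_eq_mul,
    ENNReal.toReal_mul]
  simp

lemma int_V (n k : ℕ) : ∫ ω, (V n ω) ^ k ∂(P n) = (∫⁻ ω, (μT (Tchain n ω)) ^ k ∂(P n)).toReal := by
  rw [← integral_toReal ((measurable_vol n).pow_const k).aemeasurable
    (Filter.Eventually.of_forall fun ω => ENNReal.pow_lt_top (measure_lt_top _ _))]
  refine integral_congr_ae ?_
  filter_upwards [ae_V n] with ω hω
  rw [hω, ENNReal.toReal_pow]

lemma int_V_nonneg (n k : ℕ) : 0 ≤ ∫ ω, (V n ω) ^ k ∂(P n) := by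
  rw [int_V]; exact ENNReal.toReal_nonneg

lemma int_V_le_one (n k : ℕ) : ∫ ω, (V n ω) ^ k ∂(P n) ≤ 1 := by
  rw [int_V]
  refine ENNReal.toReal_le_of_le_ofReal zero_le_one ?_
  calc ∫⁻ ω, (μT (Tchain n ω)) ^ k ∂(P n) ≤ ∫⁻ ω, 1 ∂(P n) :=
        lintegral_mono fun ω => pow_le_one' prob_le_one k
    _ = _ := by simp

lemma q_nonneg (n k : ℕ) : 0 ≤ q n k := mul_nonneg (by positivity) (int_V_nonneg n k)

lemma q_le (n k : ℕ) : q n k ≤ ((n + k).choose k : ℝ) :=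
  mul_le_of_le_one_right (by positivity) (int_V_le_one n k)

/-- The event that all points are in the hull of those with index in `S`. -/
def AS (l : ℕ) (S : Finset (Fin l)) : Set (Fin l → ℝ × ℝ) :=
  {ω | ∀ j, j ∉ S → ω j ∈ convexHull ℝ (Set.range (fun i : {i // i ∈ S} => ω i) ∪ {(1, 0), (0, 1)})}

lemma measurableSet_AS (l : ℕ) (S : Finset (Fin l)) : MeasurableSet (AS l S) := by
  have h := (isClosed_hull (κ := {i // i ∈ S})).measurableSet
  have : AS l S = ⋂ j : {j // j ∉ S}, (fun ω : Fin l → ℝ × ℝ =>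
      ((fun i : {i // i ∈ S} => ω i), ω j)) ⁻¹' {x : ({i // i ∈ S} → ℝ × ℝ) × (ℝ × ℝ) |
      x.2 ∈ convexHull ℝ (Set.range x.1 ∪ {(1, 0), (0, 1)})} := by
    ext ω; simp [AS]
  rw [this]
  refine MeasurableSet.iInter fun j => ?_
  have hm : Measurable (fun ω : Fin l → ℝ × ℝ => ((fun i : {i // i ∈ S} => ω i), ω j)) := by
    fun_prop
  exact hm h

lemma prob_AS (l : ℕ) (S : Finset (Fin l)) :
    (P l).real (AS l S) = ∫ ω, (V S.card ω) ^ (l - S.card) ∂(P S.card) := by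
  classical
  rw [int_V, measureReal_def]
  congr 1
  have h := pi_fubini μT (fun i : Fin l => i ∈ S) _
    (isClosed_hull (κ := {i // i ∈ S})).measurableSet
  have hcard : Fintype.card {j // j ∉ S} = l - S.card := by
    rw [Fintype.card_subtype_compl]; simp
  rw [hcard] at h
  refine h.trans ?_
  have hmp := @pi_comp_inj {i // i ∈ S} (Fin S.card) (ℝ × ℝ) (Subtype.fintype fun i => i ∈ S) _ _ μT _
    (fun i : {i // i ∈ S} => S.equivFin i) S.equivFin.injective
  have hmeas : Measurable fun η : {i // i ∈ S} → ℝ × ℝ =>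
      (μT (Prod.mk η ⁻¹' {x : ({i // i ∈ S} → ℝ × ℝ) × (ℝ × ℝ) |
      x.2 ∈ convexHull ℝ (Set.range x.1 ∪ {(1, 0), (0, 1)})})) ^ (l - S.card) :=
    (measurable_measure_prodMk_left (isClosed_hull (κ := {i // i ∈ S})).measurableSet).pow_const _
  refine (hmp.lintegral_comp hmeas).symm.trans ?_
  unfold P
  refine lintegral_congr fun ω => ?_
  congr 2
  ext z
  have : Set.range (fun i : {i // i ∈ S} => ω (S.equivFin i)) = Set.range ω :=
    S.equivFin.surjective.range_comp ω
  simp [Tchain, this]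

lemma sum_superset (l : ℕ) (E : Finset (Fin l)) (x y : ℝ) :
    ∑ S : Finset (Fin l), (if E ⊆ S then x ^ S.card * y ^ (l - S.card) else 0) =
      x ^ E.card * (x + y) ^ (l - E.card) := by
  classical
  have h := Finset.prod_add (fun _ : Fin l => x) (fun i => if i ∈ E then 0 else y) Finset.univ
  have hl : ∏ i : Fin l, (x + if i ∈ E then 0 else y) = x ^ E.card * (x + y) ^ (l - E.card) := by
    rw [← Finset.prod_mul_prod_compl E,
      Finset.prod_congr rfl (g := fun _ => x) (fun i hi => by simp [hi]),
        Finset.prod_congr rfl (s₁ := Eᶜ) (g := fun _ => x + y)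
          (fun i hi => by simp [Finset.mem_compl.mp hi])]
    simp [Finset.card_compl]
  rw [hl] at h
  rw [h, Finset.powerset_univ]
  refine Finset.sum_congr rfl fun S _ => ?_
  split_ifs with hES
  · rw [Finset.prod_congr (s₁ := Finset.univ \ S) rfl (g := fun _ => y) (fun i hi => by
      have : i ∉ E := fun hi2 => (Finset.mem_sdiff.mp hi).2 (hES hi2)
      simp [this])]
    simp [Finset.card_univ_sdiff]
  · obtain ⟨i, hi, hiS⟩ := Finset.not_subset.mp hES
    rw [Finset.prod_eq_zero (s := Finset.univ \ S) (i := i) (by simp [hiS]) (by simp [hi])]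
    simp

lemma p_eq (l : ℕ) (x y : ℝ) :
    ∑ p ∈ Finset.HasAntidiagonal.antidiagonal l, q p.1 p.2 * x ^ p.1 * y ^ p.2 =
      ∫ ω, x ^ (M ω) * (x + y) ^ (l - M ω) ∂(P l) := by
  classical
  have h1 : ∑ p ∈ Finset.HasAntidiagonal.antidiagonal l, q p.1 p.2 * x ^ p.1 * y ^ p.2 =
      ∑ S : Finset (Fin l), (P l).real (AS l S) * (x ^ S.card * y ^ (l - S.card)) := by
    rw [Finset.Nat.sum_antidiagonal_eq_sum_range_succ_mk, ← Finset.powerset_univ]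
    simp only [prob_AS]
    rw [Finset.sum_powerset_apply_card (fun j => (∫ ω, (V j ω) ^ (l - j) ∂(P j)) *
      (x ^ j * y ^ (l - j)))]
    simp only [Finset.card_univ, Fintype.card_fin, nsmul_eq_mul]
    refine Finset.sum_congr rfl fun n hn => ?_
    have hn' : n ≤ l := by simpa [Nat.lt_succ_iff] using hn
    unfold q
    rw [Nat.add_sub_of_le hn', Nat.choose_symm hn']
    ring
  rw [h1]
  have h2 : ∀ S : Finset (Fin l), (P l).real (AS l S) * (x ^ S.card * y ^ (l - S.card)) =
      ∫ ω, (AS l S).indicator (fun _ => x ^ S.card * y ^ (l - S.card)) ω ∂(P l) := by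
    intro S
    rw [integral_indicator_const _ (measurableSet_AS l S), smul_eq_mul]
  rw [Finset.sum_congr rfl fun S _ => h2 S, ← integral_finsetSum]
  · refine integral_congr_ae ?_
    filter_upwards [ae_good l] with ω ⟨g1, g2⟩
    have hM : M ω = (Finset.univ.filter fun i => ExtI ω i).card := by
      unfold M; simp
    rw [hM, ← sum_superset]
    refine Finset.sum_congr rfl fun S _ => ?_
    rw [Set.indicator_apply]
    congr 1
    have := hull_iff g1 g2 S
    simp only [eq_iff_iff]
    refine Iff.trans this ?_
    simp [Finset.subset_iff]
  · intro S _
    exact (integrable_const _).indicator (measurableSet_AS l S)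

lemma G_eq (l : ℕ) (t : ℝ) : G l t = ∫ ω, t ^ (M ω) ∂(P l) := by
  unfold G
  refine integral_congr_ae ?_
  filter_upwards [ae_good l] with ω ⟨g1, g2⟩
  rw [N_eq_M g1 g2]

lemma p_eq_G (l : ℕ) (x y : ℝ) (hxy : x + y ≠ 0) :
    ∑ p ∈ Finset.HasAntidiagonal.antidiagonal l, q p.1 p.2 * x ^ p.1 * y ^ p.2 =
      (x + y) ^ l * G l (x / (x + y)) := by
  rw [p_eq, G_eq, ← integral_const_mul]
  refine integral_congr_ae (Filter.Eventually.of_forall fun ω => ?_)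
  have hM : M ω ≤ l := by simpa using M_le ω
  dsimp only
  have : (x + y) ^ l = (x + y) ^ (l - M ω) * (x + y) ^ (M ω) := by
    rw [← pow_add]; congr 1; omega
  rw [this, div_pow]
  field_simp
/-! ### Real recursion -/

lemma integrable_gM (n : ℕ) (g : ℕ → ℝ) :
    Integrable (fun ω : Fin n → ℝ × ℝ => g (M ω)) (P n) := by
  refine Integrable.of_bound (C := ∑ i ∈ Finset.range (n + 1), |g i|)
    ((measurable_from_top (f := g)).comp measurable_M).aestronglyMeasurable
    (Filter.Eventually.of_forall fun ω => ?_)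
  have hM : M ω ≤ n := by simpa using M_le ω
  rw [Real.norm_eq_abs]
  exact Finset.single_le_sum (f := fun i => |g i|) (fun i _ => abs_nonneg _)
    (Finset.mem_range.mpr (Nat.lt_succ_of_le hM))

lemma lint_lt_top (n : ℕ) (g : ℕ → ℝ) : ∫⁻ ω, ENNReal.ofReal (g (M ω)) ∂(P n) ≠ ⊤ :=
  (integrable_gM n g).lintegral_lt_top.ne

lemma recursion_aux (m : ℕ) (g : ℕ → ℝ) :
    (∫⁻ ω, ENNReal.ofReal (g (M ω)) ∂(P (m + 1))).toReal = ∑ j ∈ Finset.range (m + 1),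
      (2 * (m + 1 - j) / ((m + 1) * (m + 2)) : ℝ) *
        (∫⁻ ω, ENNReal.ofReal (g (M ω + 1)) ∂(P j)).toReal := by
  rw [recursion m (fun n => ENNReal.ofReal (g n)), ENNReal.toReal_sum]
  · refine Finset.sum_congr rfl fun j hj => ?_
    have hj' : (j : ℝ) ≤ m := by exact_mod_cast Nat.lt_succ_iff.mp (Finset.mem_range.mp hj)
    rw [ENNReal.toReal_mul, ENNReal.toReal_ofReal]
    exact div_nonneg (by linarith) (by positivity)
  · intro j _
    exact ENNReal.mul_ne_top ENNReal.ofReal_ne_top (lint_lt_top j fun n => g (n + 1))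

lemma recursion_real (m : ℕ) (g : ℕ → ℝ) :
    ∫ ω, g (M ω) ∂(P (m + 1)) = ∑ j ∈ Finset.range (m + 1),
      (2 * (m + 1 - j) / ((m + 1) * (m + 2)) : ℝ) * ∫ ω, g (M ω + 1) ∂(P j) := by
  rw [integral_eq_lintegral_pos_part_sub_lintegral_neg_part (integrable_gM _ g),
    recursion_aux m g, recursion_aux m (fun n => - g n), ← Finset.sum_sub_distrib]
  refine Finset.sum_congr rfl fun j _ => ?_
  rw [integral_eq_lintegral_pos_part_sub_lintegral_neg_part
    (integrable_gM j fun n => g (n + 1))]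
  ring

lemma G_rec (m : ℕ) (t : ℝ) :
    ((m : ℝ) + 1) * (m + 2) * G (m + 1) t =
      ∑ j ∈ Finset.range (m + 1), 2 * ((m : ℝ) + 1 - j) * (t * G j t) := by
  rw [G_eq, recursion_real m (fun n => t ^ n), Finset.mul_sum]
  refine Finset.sum_congr rfl fun j _ => ?_
  have : ∫ ω, t ^ (M ω + 1) ∂(P j) = t * G j t := by
    rw [G_eq, ← integral_const_mul]
    refine integral_congr_ae (Filter.Eventually.of_forall fun ω => ?_)
    simp only [pow_succ]; ring
  rw [this]
  field_simp

/-- Diagonal sums. -/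
def pd (x y : ℝ) (l : ℕ) : ℝ :=
  ∑ p ∈ Finset.HasAntidiagonal.antidiagonal l, q p.1 p.2 * x ^ p.1 * y ^ p.2

lemma pd_rec (x y : ℝ) (hxy : x + y ≠ 0) (m : ℕ) :
    ((m : ℝ) + 1) * (m + 2) * pd x y (m + 1) =
      2 * x * ∑ p ∈ Finset.HasAntidiagonal.antidiagonal m,
        pd x y p.1 * (((p.2 : ℝ) + 1) * (x + y) ^ p.2) := by
  rw [Finset.Nat.sum_antidiagonal_eq_sum_range_succ_mk]
  unfold pd
  simp only [p_eq_G _ x y hxy]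
  have h := G_rec m (x / (x + y))
  calc _ = (x + y) ^ (m + 1) * (((m : ℝ) + 1) * (m + 2) * G (m + 1) (x / (x + y))) := by ring
    _ = _ := by
      rw [h, Finset.mul_sum, Finset.mul_sum]
      refine Finset.sum_congr rfl fun j hj => ?_
      have hj' : j ≤ m := by simpa [Nat.lt_succ_iff] using hj
      have e : (x + y) ^ (m + 1) = (x + y) * ((x + y) ^ j * (x + y) ^ (m - j)) := by
        rw [← pow_add, ← pow_succ']; congr 1; omega
      rw [e, Nat.cast_sub hj']
      field_simp
      ring

/-! ### Summation -/

lemma choose_sum (x y : ℝ) (l : ℕ) :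
    ∑ p ∈ Finset.HasAntidiagonal.antidiagonal l,
      (((p.1 + p.2).choose p.2 : ℕ) : ℝ) * |x| ^ p.1 * |y| ^ p.2 = (|x| + |y|) ^ l := by
  rw [(Commute.all (|x|) (|y|)).add_pow']
  refine Finset.sum_congr rfl fun p hp => ?_
  rw [Finset.HasAntidiagonal.mem_antidiagonal] at hp
  rw [← hp, nsmul_eq_mul, Nat.choose_symm_add, mul_assoc]

lemma term_bound (x y : ℝ) (n k : ℕ) :
    |q n k * x ^ n * y ^ k| ≤ (((n + k).choose k : ℕ) : ℝ) * |x| ^ n * |y| ^ k := by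
  rw [abs_mul, abs_mul, abs_pow, abs_pow, abs_of_nonneg (q_nonneg n k)]
  gcongr
  exact q_le n k

lemma summable_weighted (x y : ℝ) (w : ℕ → ℝ) (hw : ∀ l, 0 ≤ w l)
    (hs : Summable fun l => w l * (|x| + |y|) ^ l) :
    Summable fun p : ℕ × ℕ => |w (p.1 + p.2) * (q p.1 p.2 * x ^ p.1 * y ^ p.2)| := by
  have h1 : Summable fun p : ℕ × ℕ =>
      w (p.1 + p.2) * ((((p.1 + p.2).choose p.2 : ℕ) : ℝ) * |x| ^ p.1 * |y| ^ p.2) := by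
    rw [← Finset.HasAntidiagonal.sigmaAntidiagonalEquivProd.summable_iff, summable_sigma_of_nonneg]
    · refine ⟨fun l => (hasSum_fintype _).summable, ?_⟩
      refine hs.congr fun l => ?_
      rw [tsum_fintype, ← choose_sum, Finset.mul_sum, ← Finset.sum_coe_sort]
      refine Finset.sum_congr rfl fun p _ => ?_
      have := Finset.HasAntidiagonal.mem_antidiagonal.mp p.2
      simp only [Function.comp, Finset.HasAntidiagonal.sigmaAntidiagonalEquivProd_apply]
      rw [this]
    · intro p
      exact mul_nonneg (hw _) (by positivity)
  refine Summable.of_nonneg_of_le (fun p => abs_nonneg _) (fun p => ?_) h1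
  rw [abs_mul, abs_of_nonneg (hw _)]
  exact mul_le_mul_of_nonneg_left (term_bound x y p.1 p.2) (hw _)

lemma tsum_diag (F : ℕ × ℕ → ℝ) (hF : Summable F) :
    ∑' p, F p = ∑' l, ∑ p ∈ Finset.HasAntidiagonal.antidiagonal l, F p := by
  rw [← Finset.HasAntidiagonal.sigmaAntidiagonalEquivProd.tsum_eq F]
  refine (Summable.tsum_sigma' (fun l => (hasSum_fintype _).summable)
    ((Finset.HasAntidiagonal.sigmaAntidiagonalEquivProd.summable_iff (f := F)).mpr hF)).trans ?_
  refine tsum_congr fun l => ?_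
  rw [tsum_fintype]
  exact Finset.sum_coe_sort (Finset.HasAntidiagonal.antidiagonal l) F

lemma pd_bound (x y : ℝ) (l : ℕ) : |pd x y l| ≤ (|x| + |y|) ^ l := by
  rw [← choose_sum]
  exact (Finset.abs_sum_le_sum_abs _ _).trans (Finset.sum_le_sum fun p _ => term_bound x y _ _)

lemma tsum_geom2 (s : ℝ) (hs : |s| < 1) :
    (Summable fun m : ℕ => ‖((m : ℝ) + 1) * s ^ m‖) ∧
    ∑' m : ℕ, ((m : ℝ) + 1) * s ^ m = 1 / (1 - s) ^ 2 := by
  have h1 := tsum_choose_mul_geometric_of_norm_lt_one 1 (r := s) (by simpa using hs)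
  have h2 := summable_choose_mul_geometric_of_norm_lt_one 1 (r := s) (by simpa using hs)
  simp only [Nat.choose_one_right, Nat.cast_add, Nat.cast_one, Nat.reduceAdd] at h1 h2
  exact ⟨h2.norm, h1⟩
/-- for `|x| + |y| < 1`, `x + y ≠ 0`, the series
`Σ (n+k)(n+k+1) q_{n,k} x^n y^k` converges absolutely, equals
`Σ_ℓ ℓ(ℓ+1)(x+y)^ℓ G_ℓ(x/(x+y))`, and equals `2x/(1-x-y)^2 · Q(x,y)`. -/
theorem stmt4 (x y : ℝ) (h : |x| + |y| < 1) (hxy : x + y ≠ 0) :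
    Summable (fun p : ℕ × ℕ =>
      |((p.1 : ℝ) + p.2) * ((p.1 : ℝ) + p.2 + 1) * q p.1 p.2 * x ^ p.1 * y ^ p.2|) ∧
    (∑' p : ℕ × ℕ, ((p.1 : ℝ) + p.2) * ((p.1 : ℝ) + p.2 + 1) * q p.1 p.2 * x ^ p.1 * y ^ p.2
      = ∑' l : ℕ, (l : ℝ) * ((l : ℝ) + 1) * (x + y) ^ l * G l (x / (x + y))) ∧
    (∑' p : ℕ × ℕ, ((p.1 : ℝ) + p.2) * ((p.1 : ℝ) + p.2 + 1) * q p.1 p.2 * x ^ p.1 * y ^ p.2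
      = 2 * x / (1 - x - y) ^ 2 * ∑' p : ℕ × ℕ, q p.1 p.2 * x ^ p.1 * y ^ p.2) := by
  have hr0 : 0 ≤ |x| + |y| := by positivity
  have hrn : ‖|x| + |y|‖ < 1 := by rwa [Real.norm_eq_abs, abs_of_nonneg hr0]
  have hs1 : |x + y| < 1 := lt_of_le_of_lt (abs_add_le x y) h
  have hw : Summable fun l : ℕ => ((l : ℝ) * ((l : ℝ) + 1)) * (|x| + |y|) ^ l := by
    have a1 := summable_pow_mul_geometric_of_norm_lt_one 2 hrn
    have a2 := summable_pow_mul_geometric_of_norm_lt_one 1 hrn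
    refine (a1.add a2).congr fun l => ?_
    ring
  have hS := summable_weighted x y (fun l : ℕ => (l : ℝ) * ((l : ℝ) + 1))
    (fun l => by positivity) hw
  have hS1 : Summable (fun p : ℕ × ℕ =>
      |((p.1 : ℝ) + p.2) * ((p.1 : ℝ) + p.2 + 1) * q p.1 p.2 * x ^ p.1 * y ^ p.2|) := by
    refine hS.congr fun p => ?_
    push_cast
    congr 1
    ring
  have hS0 : Summable (fun p : ℕ × ℕ => q p.1 p.2 * x ^ p.1 * y ^ p.2) := by
    have := summable_weighted x y (fun _ => 1) (fun _ => zero_le_one)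
      (by simpa using summable_geometric_of_norm_lt_one hrn)
    refine (this.congr fun p => ?_).of_abs
    rw [one_mul]
  have hd : ∑' p : ℕ × ℕ, ((p.1 : ℝ) + p.2) * ((p.1 : ℝ) + p.2 + 1) * q p.1 p.2 * x ^ p.1 * y ^ p.2
      = ∑' l : ℕ, (l : ℝ) * ((l : ℝ) + 1) * pd x y l := by
    rw [tsum_diag _ hS1.of_abs]
    refine tsum_congr fun l => ?_
    unfold pd
    rw [Finset.mul_sum]
    refine Finset.sum_congr rfl fun p hp => ?_
    rw [← Finset.HasAntidiagonal.mem_antidiagonal.mp hp]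
    push_cast
    ring
  refine ⟨hS1, ?_, ?_⟩
  · rw [hd]
    refine tsum_congr fun l => ?_
    unfold pd
    rw [p_eq_G l x y hxy]
    ring
  · have hpd : Summable fun l => ‖pd x y l‖ :=
      Summable.of_nonneg_of_le (fun l => norm_nonneg _) (fun l => pd_bound x y l)
        (summable_geometric_of_norm_lt_one hrn)
    obtain ⟨hg1, hg2⟩ := tsum_geom2 (x + y) hs1
    have hsl : Summable fun l : ℕ => (l : ℝ) * ((l : ℝ) + 1) * pd x y l := by
      refine Summable.of_norm_bounded hw fun l => ?_
      rw [norm_mul, Real.norm_eq_abs, abs_of_nonneg (by positivity : 0 ≤ (l : ℝ) * ((l : ℝ) + 1))]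
      exact mul_le_mul_of_nonneg_left (pd_bound x y l) (by positivity)
    have hq : ∑' p : ℕ × ℕ, q p.1 p.2 * x ^ p.1 * y ^ p.2 = ∑' l, pd x y l := tsum_diag _ hS0
    have hc := tsum_mul_tsum_eq_tsum_sum_antidiagonal_of_summable_norm hpd hg1
    rw [hd, hq, hsl.tsum_eq_zero_add]
    have he : ∀ m : ℕ, (((m + 1 : ℕ) : ℝ)) * (((m + 1 : ℕ) : ℝ) + 1) * pd x y (m + 1) =
        2 * x * ∑ p ∈ Finset.HasAntidiagonal.antidiagonal m,
          pd x y p.1 * (((p.2 : ℝ) + 1) * (x + y) ^ p.2) := by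
      intro m
      rw [← pd_rec x y hxy m]
      push_cast
      ring
    rw [tsum_congr he, tsum_mul_left, ← hc, hg2, show 1 - x - y = 1 - (x + y) by ring]
    simp only [Nat.cast_zero, zero_mul, zero_add]
    ring

end
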